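/- arXiv:2212.12566 — 9 statements merged into one kernel-verified Lean document; each statement's English description precedes it below -/
import Mathlib

section
/- Let (h_n)_{n≥1} be a sequence of step functions on ℝ with h_n ≥ h_{n+1} ≥ 0 pointwise for all n and h_n(x) → 0 for every x ∈ ℝ. Then I(h_n) → 0, where I is the width integral on step functions. -/
open Filter Topology

/-- A bounded interval in ℝ: an order-convex, bounded-above and bounded-below subset. -/
def IsBoundedInterval (D : Set ℝ) : Prop :=
  D.OrdConnected ∧ BddAbove D ∧ BddBelow D

/-- A step function on ℝ: a finite real linear combination of indicator functions of
bounded intervals. -/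
def IsStepFun (f : ℝ → ℝ) : Prop :=
  f ∈ Submodule.span ℝ {g : ℝ → ℝ | ∃ D : Set ℝ, IsBoundedInterval D ∧ g = D.indicator 1}

/-- Each bounded interval has Lebesgue measure `sSup D - sInf D`. -/
theorem volume_isBoundedInterval (D : Set ℝ) (hD : IsBoundedInterval D) :
    MeasureTheory.volume D = ENNReal.ofReal (sSup D - sInf D) := by
  obtain ⟨hc, ha, hb⟩ := hD
  rcases D.eq_empty_or_nonempty with rfl | hne
  · simp
  apply le_antisymm
  · rw [← Real.volume_Icc]
    exact MeasureTheory.measure_mono fun x hx => ⟨csInf_le hb hx, le_csSup ha hx⟩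
  · rw [← Real.volume_Ioo]
    refine MeasureTheory.measure_mono fun x hx => ?_
    obtain ⟨a, haD, hax⟩ := exists_lt_of_csInf_lt hne hx.1
    obtain ⟨b, hbD, hxb⟩ := exists_lt_of_lt_csSup hne hx.2
    exact hc.out haD hbD ⟨hax.le, hxb.le⟩

/-- On step functions, the width integral is the Lebesgue integral. -/
theorem stepFun_integral (I : (ℝ → ℝ) →ₗ[ℝ] ℝ)
    (hI : ∀ D : Set ℝ, IsBoundedInterval D → I (D.indicator 1) = sSup D - sInf D)
    (f : ℝ → ℝ) (hf : IsStepFun f) :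
    MeasureTheory.Integrable f ∧ I f = ∫ x, f x := by
  unfold IsStepFun at hf
  induction hf using Submodule.span_induction with
  | mem f hf =>
    obtain ⟨D, hD, rfl⟩ := hf
    have hv := volume_isBoundedInterval D hD
    have hm : MeasurableSet D := hD.1.measurableSet
    have hle : 0 ≤ sSup D - sInf D := by
      rcases D.eq_empty_or_nonempty with rfl | hne
      · simp
      · exact sub_nonneg.2 (csInf_le_csSup hne hD.2.2 hD.2.1)
    constructor
    · rw [MeasureTheory.integrable_indicator_iff hm]
      exact MeasureTheory.integrableOn_const (by rw [hv]; exact ENNReal.ofReal_ne_top)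
    · rw [hI D hD, MeasureTheory.integral_indicator_one hm, MeasureTheory.measureReal_def, hv,
        ENNReal.toReal_ofReal hle]
  | zero => exact ⟨MeasureTheory.integrable_zero _ _ _, by simp⟩
  | add f g _ _ hf hg =>
    refine ⟨hf.1.add hg.1, ?_⟩
    rw [map_add, hf.2, hg.2, ← MeasureTheory.integral_add hf.1 hg.1]
    rfl
  | smul c f _ hf =>
    refine ⟨hf.1.smul c, ?_⟩
    rw [map_smul, hf.2, ← MeasureTheory.integral_smul]
    rfl

/-- Continuity of the width integral: if `I` is a linear functional assigning to the
indicator of each bounded interval its length (so `I` restricts to the width integral on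
step functions), and `(h n)` is a sequence of step functions with
`h n ≥ h (n+1) ≥ 0` pointwise and `h n → 0` pointwise, then `I (h n) → 0`. -/
theorem width_integral_monotone_continuity (I : (ℝ → ℝ) →ₗ[ℝ] ℝ)
    (hI : ∀ D : Set ℝ, IsBoundedInterval D → I (D.indicator 1) = sSup D - sInf D)
    (h : ℕ → ℝ → ℝ) (hstep : ∀ n, IsStepFun (h n))
    (hmono : ∀ n x, h (n + 1) x ≤ h n x)
    (hpos : ∀ n x, 0 ≤ h (n + 1) x)
    (hlim : ∀ x, Tendsto (fun n => h n x) atTop (𝓝 0)) :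
    Tendsto (fun n => I (h n)) atTop (𝓝 0) := by
  have key := fun n => stepFun_integral I hI (h n) (hstep n)
  have hanti : ∀ x, Antitone fun n => h n x := fun x => antitone_nat_of_succ_le fun n => hmono n x
  have h0 : ∀ n x, 0 ≤ h n x := fun n x => (hpos n x).trans (hmono n x)
  have := MeasureTheory.tendsto_integral_of_dominated_convergence (μ := MeasureTheory.volume)
    (F := h) (f := fun _ => 0) (h 0)
    (fun n => (key n).1.aestronglyMeasurable) (key 0).1
    (fun n => Eventually.of_forall fun x => by
      rw [Real.norm_of_nonneg (h0 n x)]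
      exact hanti x (Nat.zero_le n))
    (Eventually.of_forall hlim)
  simpa [fun n => (key n).2] using this
end

section
/- Let φ : ℝ → ℝ be a monotone increasing function. Define the Stieltjes mass of bounded intervals by |(a,b)|_φ = φ(b−0) − φ(a+0) for a < b, |{c}|_φ = φ(c+0) − φ(c−0), and additively for half-open and closed intervals (so |[a,b]|_φ = φ(b+0) − φ(a−0), |(a,b]|_φ = φ(b+0) − φ(a+0), |[a,b)|_φ = φ(b−0) − φ(a−0)). If a bounded interval R is the union of a countable family (R_j)_{j≥1} of pairwise disjoint bounded intervals, then |R|_φ = Σ_{j=1}^∞ |R_j|_φ. -/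
open scoped Classical

/-- The Stieltjes mass of a bounded interval `D` with respect to an increasing function `φ`:
with `p = inf D` and `q = sup D`, it is
`(φ(q+0) or φ(q−0) according to whether q ∈ D or not) − (φ(p−0) or φ(p+0) according to
whether p ∈ D or not)`; the mass of the empty set is `0`.  This agrees with
`|(a,b)|_φ = φ(b−0) − φ(a+0)`, `|{c}|_φ = φ(c+0) − φ(c−0)`, `|[a,b]|_φ = φ(b+0) − φ(a−0)`,
`|(a,b]|_φ = φ(b+0) − φ(a+0)` and `|[a,b)|_φ = φ(b−0) − φ(a−0)`. -/
noncomputable def stieltjesMass (φ : ℝ → ℝ) (D : Set ℝ) : ℝ :=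
  if D.Nonempty then
    (if sSup D ∈ D then Function.rightLim φ (sSup D) else Function.leftLim φ (sSup D)) -
      (if sInf D ∈ D then Function.leftLim φ (sInf D) else Function.rightLim φ (sInf D))
  else 0

theorem leftLim_stieltjesFunction_eq {φ : ℝ → ℝ} (hφ : Monotone φ) (x : ℝ) :
    Function.leftLim hφ.stieltjesFunction x = Function.leftLim φ x := by
  have hs : Monotone hφ.stieltjesFunction := hφ.stieltjesFunction.mono
  apply le_antisymm
  · have h1 := hs.tendsto_leftLim x
    refine le_of_tendsto h1 ?_
    filter_upwards [self_mem_nhdsWithin] with y hy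
    rw [hφ.stieltjesFunction_eq]
    exact hφ.rightLim_le_leftLim hy
  · refine le_of_tendsto (hφ.tendsto_leftLim x) ?_
    filter_upwards [self_mem_nhdsWithin] with y hy
    refine le_trans ?_ (hs.le_leftLim hy)
    rw [hφ.stieltjesFunction_eq]
    exact hφ.le_rightLim le_rfl

theorem stieltjesMass_eq_measure {φ : ℝ → ℝ} (hφ : Monotone φ) {D : Set ℝ}
    (hD : IsBoundedInterval D) :
    ENNReal.ofReal (stieltjesMass φ D) = hφ.stieltjesFunction.measure D := by
  obtain ⟨hc, ha, hb⟩ := hD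
  unfold stieltjesMass
  split_ifs with hne hS hI hI
  · have : D = Set.Icc (sInf D) (sSup D) :=
      Set.Subset.antisymm (subset_Icc_csInf_csSup hb ha) (hc.out hI hS)
    conv_rhs => rw [this]
    rw [StieltjesFunction.measure_Icc, leftLim_stieltjesFunction_eq, hφ.stieltjesFunction_eq]
  · have : D = Set.Ioc (sInf D) (sSup D) := by
      ext x
      refine ⟨fun hx => ⟨lt_of_le_of_ne (csInf_le hb hx) ?_, le_csSup ha hx⟩, fun hx => ?_⟩
      · rintro h
        exact hI (h ▸ hx)
      · obtain ⟨y, hy, hyx⟩ := exists_lt_of_csInf_lt hne hx.1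
        exact hc.out hy hS ⟨hyx.le, hx.2⟩
    conv_rhs => rw [this]
    rw [StieltjesFunction.measure_Ioc, hφ.stieltjesFunction_eq, hφ.stieltjesFunction_eq]
  · have : D = Set.Ico (sInf D) (sSup D) := by
      ext x
      refine ⟨fun hx => ⟨csInf_le hb hx, lt_of_le_of_ne (le_csSup ha hx) ?_⟩, fun hx => ?_⟩
      · rintro h
        exact hS (h ▸ hx)
      · obtain ⟨y, hy, hyx⟩ := exists_lt_of_lt_csSup hne hx.2
        exact hc.out hI hy ⟨hx.1, hyx.le⟩
    conv_rhs => rw [this]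
    rw [StieltjesFunction.measure_Ico, leftLim_stieltjesFunction_eq, leftLim_stieltjesFunction_eq]
  · have : D = Set.Ioo (sInf D) (sSup D) := by
      ext x
      refine ⟨fun hx => ⟨lt_of_le_of_ne (csInf_le hb hx) ?_,
        lt_of_le_of_ne (le_csSup ha hx) ?_⟩, fun hx => ?_⟩
      · rintro h
        exact hI (h ▸ hx)
      · rintro h
        exact hS (h ▸ hx)
      · obtain ⟨y, hy, hyx⟩ := exists_lt_of_csInf_lt hne hx.1
        obtain ⟨z, hz, hzx⟩ := exists_lt_of_lt_csSup hne hx.2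
        exact hc.out hy hz ⟨hyx.le, hzx.le⟩
    conv_rhs => rw [this]
    rw [StieltjesFunction.measure_Ioo, leftLim_stieltjesFunction_eq, hφ.stieltjesFunction_eq]
  · rw [Set.not_nonempty_iff_eq_empty.mp hne]
    simp

/-- Countable additivity of the Stieltjes mass: if a bounded interval `R` is the union of a
countable family of pairwise disjoint bounded intervals `R j`, then
`|R|_φ = Σ_j |R j|_φ` (the sum of the nonnegative series taken in `[0,∞]`). -/
theorem stieltjesMass_countably_additive (φ : ℝ → ℝ) (hφ : Monotone φ)
    (R : Set ℝ) (hR : IsBoundedInterval R)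
    (Rj : ℕ → Set ℝ) (hRj : ∀ j, IsBoundedInterval (Rj j))
    (hdisj : Pairwise (Function.onFun Disjoint Rj))
    (hunion : (⋃ j, Rj j) = R) :
    ∑' j, ENNReal.ofReal (stieltjesMass φ (Rj j)) = ENNReal.ofReal (stieltjesMass φ R) := by
  have hm : ∀ j, ENNReal.ofReal (stieltjesMass φ (Rj j)) = hφ.stieltjesFunction.measure (Rj j) :=
    fun j => stieltjesMass_eq_measure hφ (hRj j)
  rw [tsum_congr hm, stieltjesMass_eq_measure hφ hR, ← hunion,
    MeasureTheory.measure_iUnion hdisj (fun j => (hRj j).1.measurableSet)]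
end

section
/- Let −∞ ≤ a < b ≤ ∞ and let f : ℝ → [0,∞) be a function that vanishes outside the open interval (a,b) and whose restriction to (a,b) is continuous. Then there exists a sequence of step functions on ℝ increasing pointwise to f. -/
open Filter Topology

/-- The dyadic cell of level `n` and index `k`. -/
def dyCell (n : ℕ) (k : ℤ) : Set ℝ := {y : ℝ | ⌊(2:ℝ) ^ n * y⌋ = k}

/-- Infimum of `f` on the dyadic cell containing `x`. -/
noncomputable def dyInf (f : ℝ → ℝ) (n : ℕ) (k : ℤ) : ℝ := sInf (f '' dyCell n k)

/-- The index range at level `n`. -/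
noncomputable def dyRange (n : ℕ) : Finset ℤ := Finset.Ico (-((n : ℤ) * 2 ^ n)) ((n : ℤ) * 2 ^ n)

/-- The dyadic lower step approximation. -/
noncomputable def dyStep (f : ℝ → ℝ) (n : ℕ) : ℝ → ℝ :=
  ∑ k ∈ dyRange n, dyInf f n k • (dyCell n k).indicator (1 : ℝ → ℝ)

lemma dyCell_interval (n : ℕ) (k : ℤ) : IsBoundedInterval (dyCell n k) := by
  have hp : (0:ℝ) < 2 ^ n := by positivity
  have : dyCell n k = Set.Ico ((k:ℝ) / 2 ^ n) (((k:ℝ) + 1) / 2 ^ n) := by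
    ext y
    simp only [dyCell, Set.mem_ofPred_eq, Int.floor_eq_iff, Set.mem_Ico, div_le_iff₀ hp,
      lt_div_iff₀ hp, mul_comm]
  rw [this]
  exact ⟨Set.ordConnected_Ico, bddAbove_Ico, bddBelow_Ico⟩

lemma dyStep_isStep (f : ℝ → ℝ) (n : ℕ) : IsStepFun (dyStep f n) := by
  unfold IsStepFun dyStep
  refine Submodule.sum_mem _ fun k _ => Submodule.smul_mem _ _ (Submodule.subset_span ?_)
  exact ⟨_, dyCell_interval n k, rfl⟩

lemma dyStep_apply (f : ℝ → ℝ) (n : ℕ) (x : ℝ) :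
    dyStep f n x = if ⌊(2:ℝ) ^ n * x⌋ ∈ dyRange n then dyInf f n ⌊(2:ℝ) ^ n * x⌋ else 0 := by
  simp only [dyStep, Finset.sum_apply, Pi.smul_apply, Set.indicator_apply, dyCell,
    Set.mem_ofPred_eq, smul_eq_mul, Pi.one_apply, mul_ite, mul_one, mul_zero,
    Finset.sum_ite_eq]

lemma dyInf_nonneg (f : ℝ → ℝ) (hf0 : ∀ x, 0 ≤ f x) (n : ℕ) (k : ℤ) : 0 ≤ dyInf f n k := by
  apply Real.sInf_nonneg
  rintro _ ⟨y, _, rfl⟩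
  exact hf0 y

lemma dyBdd (f : ℝ → ℝ) (hf0 : ∀ x, 0 ≤ f x) (s : Set ℝ) : BddBelow (f '' s) := by
  refine ⟨0, ?_⟩
  rintro _ ⟨y, _, rfl⟩
  exact hf0 y

lemma dyFloor (n : ℕ) (y : ℝ) : ⌊(2:ℝ) ^ n * y⌋ = ⌊(2:ℝ) ^ (n + 1) * y⌋ / 2 := by
  have h : (2:ℝ) ^ n * y = ((2:ℝ) ^ (n + 1) * y) / (2:ℕ) := by
    rw [pow_succ]; push_cast; ring
  rw [h, Int.floor_div_natCast]
  rfl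

lemma dyStep_mono (f : ℝ → ℝ) (hf0 : ∀ x, 0 ≤ f x) (n : ℕ) (x : ℝ) :
    dyStep f n x ≤ dyStep f (n + 1) x := by
  rw [dyStep_apply, dyStep_apply]
  by_cases h : ⌊(2:ℝ) ^ n * x⌋ ∈ dyRange n
  · have h' : ⌊(2:ℝ) ^ (n + 1) * x⌋ ∈ dyRange (n + 1) := by
      rw [dyFloor] at h
      simp only [dyRange, Finset.mem_Ico] at h ⊢
      have e : (((n + 1 : ℕ) : ℤ)) * 2 ^ (n + 1) = 2 * ((n : ℤ) * 2 ^ n) + 2 * 2 ^ n := by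
        push_cast; ring
      have hp : (0:ℤ) < 2 ^ n := by positivity
      rw [e]
      omega
    rw [if_pos h, if_pos h']
    refine csInf_le_csInf (dyBdd f hf0 _) (Set.Nonempty.image f ⟨x, rfl⟩) ?_
    apply Set.image_mono
    intro y hy
    simp only [dyCell, Set.mem_ofPred_eq] at hy ⊢
    rw [dyFloor, hy, ← dyFloor]
  · rw [if_neg h]
    split_ifs
    · exact dyInf_nonneg f hf0 _ _
    · exact le_rfl

lemma dyStep_nonneg (f : ℝ → ℝ) (hf0 : ∀ x, 0 ≤ f x) (n : ℕ) (x : ℝ) : 0 ≤ dyStep f n x := by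
  rw [dyStep_apply]
  split_ifs
  · exact dyInf_nonneg f hf0 _ _
  · exact le_rfl

lemma dyStep_le (f : ℝ → ℝ) (hf0 : ∀ x, 0 ≤ f x) (n : ℕ) (x : ℝ) : dyStep f n x ≤ f x := by
  rw [dyStep_apply]
  split_ifs
  · exact csInf_le (dyBdd f hf0 _) ⟨x, rfl, rfl⟩
  · exact hf0 x

lemma dyRange_mem (n : ℕ) (x : ℝ) (h : |x| < n) : ⌊(2:ℝ) ^ n * x⌋ ∈ dyRange n := by
  have hp : (0:ℝ) < 2 ^ n := by positivity
  obtain ⟨h1, h2⟩ := abs_lt.1 h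
  simp only [dyRange, Finset.mem_Ico]
  constructor
  · rw [Int.le_floor]; push_cast; nlinarith
  · rw [Int.floor_lt]; push_cast; nlinarith

lemma dyStep_tendsto (f : ℝ → ℝ) (hf0 : ∀ x, 0 ≤ f x) (x : ℝ) (hc : ContinuousAt f x) :
    Tendsto (fun n => dyStep f n x) atTop (𝓝 (f x)) := by
  rw [Metric.tendsto_atTop']
  intro ε hε
  obtain ⟨δ, hδ, hd⟩ := Metric.continuousAt_iff.1 hc (ε / 2) (by positivity)
  obtain ⟨N, hN⟩ := exists_nat_gt |x|
  obtain ⟨M, hM⟩ := exists_pow_lt_of_lt_one hδ (by norm_num : (1/2 : ℝ) < 1)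
  refine ⟨max N M, fun n hn => ?_⟩
  have hnN : N ≤ n := (le_max_left _ _).trans hn.le
  have hnM : M ≤ n := (le_max_right _ _).trans hn.le
  have hx : |x| < n := hN.trans_le (by exact_mod_cast hnN)
  have hp : (0:ℝ) < 2 ^ n := by positivity
  have hsmall : (1/2 : ℝ) ^ n < δ :=
    (pow_le_pow_of_le_one (by norm_num) (by norm_num) hnM).trans_lt hM
  have hlow : f x - ε / 2 ≤ dyStep f n x := by
    rw [dyStep_apply, if_pos (dyRange_mem n x hx)]
    refine le_csInf ⟨f x, x, rfl, rfl⟩ ?_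
    rintro _ ⟨y, hy, rfl⟩
    have h1 : |(2:ℝ) ^ n * y - 2 ^ n * x| < 1 := Int.abs_sub_lt_one_of_floor_eq_floor hy
    rw [← mul_sub, abs_mul, abs_of_pos hp] at h1
    have h2 : dist y x < δ := by
      rw [Real.dist_eq]
      refine lt_trans ?_ hsmall
      rw [one_div, inv_pow, ← one_div, lt_div_iff₀ hp]
      linarith
    have h3 := hd h2
    rw [Real.dist_eq] at h3
    linarith [(abs_lt.1 h3).1]
  have hup := dyStep_le f hf0 n x
  rw [Real.dist_eq, abs_lt]
  constructor <;> linarith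

/-- Let `−∞ ≤ a < b ≤ ∞` and let `f : ℝ → [0,∞)` vanish outside the open interval `(a,b)`
and be continuous on `(a,b)`.  Then some sequence of step functions increases pointwise
to `f`. -/
theorem exists_stepFun_seq_tendsto (a b : EReal) (hab : a < b) (f : ℝ → ℝ)
    (hf0 : ∀ x, 0 ≤ f x)
    (hsupp : ∀ x : ℝ, ¬(a < (x : EReal) ∧ (x : EReal) < b) → f x = 0)
    (hcont : ContinuousOn f {x : ℝ | a < (x : EReal) ∧ (x : EReal) < b}) :
    ∃ g : ℕ → ℝ → ℝ, (∀ n, IsStepFun (g n)) ∧ (∀ n x, g n x ≤ g (n + 1) x) ∧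
      ∀ x, Tendsto (fun n => g n x) atTop (𝓝 (f x)) := by
  refine ⟨dyStep f, dyStep_isStep f, dyStep_mono f hf0, fun x => ?_⟩
  by_cases hx : a < (x : EReal) ∧ (x : EReal) < b
  · have ho : IsOpen {x : ℝ | a < (x : EReal) ∧ (x : EReal) < b} :=
      (isOpen_lt continuous_const continuous_coe_real_ereal).inter
        (isOpen_lt continuous_coe_real_ereal continuous_const)
    exact dyStep_tendsto f hf0 x (hcont.continuousAt (ho.mem_nhds hx))
  · have h0 := hsupp x hx
    have : ∀ n, dyStep f n x = f x := fun n =>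
      le_antisymm (dyStep_le f hf0 n x) (h0 ▸ dyStep_nonneg f hf0 n x)
    simp only [this]
    exact tendsto_const_nhds
end

section
/- Let f : ℝ → ℝ be bounded, vanish outside some bounded set, and be continuous at all but finitely many points of ℝ. Then there exist a sequence of step functions on ℝ increasing pointwise to f and a sequence of step functions on ℝ decreasing pointwise to f. -/
open Filter Topology

/-- Counts, with multiplicity, the positions of `x` relative to the points of `E`. -/
noncomputable def posCount (E : Finset ℝ) (x : ℝ) : ℤ :=
  ∑ e ∈ E, ((if e < x then 1 else 0) + (if e ≤ x then 1 else 0))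

/-- Monotone integer label of the cell of `x` at level `n`. -/
noncomputable def cellLabel (E : Finset ℝ) (n : ℕ) (x : ℝ) : ℤ :=
  ⌊(2 : ℝ) ^ n * x⌋ + posCount E x

theorem posTerm_mono (e : ℝ) {x y : ℝ} (h : x ≤ y) :
    ((if e < x then 1 else 0) + (if e ≤ x then 1 else 0) : ℤ) ≤
      (if e < y then 1 else 0) + (if e ≤ y then 1 else 0) := by
  split_ifs <;> first | omega | (exfalso; linarith)

theorem posCount_mono (E : Finset ℝ) : Monotone (posCount E) := fun _ _ h =>
  Finset.sum_le_sum fun e _ => posTerm_mono e h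

theorem floorPart_mono (n : ℕ) : Monotone (fun x : ℝ => ⌊(2 : ℝ) ^ n * x⌋) := fun _ _ h =>
  Int.floor_mono (mul_le_mul_of_nonneg_left h (by positivity))

theorem cellLabel_mono (E : Finset ℝ) (n : ℕ) : Monotone (cellLabel E n) := fun _ _ h =>
  add_le_add (floorPart_mono n h) (posCount_mono E h)

theorem cellLabel_eq (E : Finset ℝ) (n : ℕ) {x y : ℝ} (h : cellLabel E n x = cellLabel E n y) :
    ⌊(2 : ℝ) ^ n * x⌋ = ⌊(2 : ℝ) ^ n * y⌋ ∧ posCount E x = posCount E y := by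
  unfold cellLabel at h
  rcases le_total x y with hxy | hxy
  · have h1 := floorPart_mono n hxy
    have h2 := posCount_mono E hxy
    simp only at h1
    omega
  · have h1 := floorPart_mono n hxy
    have h2 := posCount_mono E hxy
    simp only at h1
    omega

theorem posCount_eq_aux (E : Finset ℝ) {x y : ℝ} (hxy : x ≤ y) (h : posCount E x = posCount E y)
    {e : ℝ} (he : e ∈ E) : (e < x ↔ e < y) ∧ (e ≤ x ↔ e ≤ y) := by
  have := (Finset.sum_eq_sum_iff_of_le (fun e _ => posTerm_mono e hxy)).1 h e he
  refine ⟨⟨fun h => h.trans_le hxy, fun h1 => ?_⟩, ⟨fun h => h.trans hxy, fun h1 => ?_⟩⟩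
  · by_contra h2
    rw [if_neg h2, if_pos h1, if_pos h1.le] at this
    split_ifs at this <;> omega
  · by_contra h2
    rw [if_neg h2, if_pos h1, if_neg (fun h3 => h2 (le_of_lt h3))] at this
    split_ifs at this <;> omega

theorem posCount_eq (E : Finset ℝ) {x y : ℝ} (h : posCount E x = posCount E y)
    {e : ℝ} (he : e ∈ E) : (e < x ↔ e < y) ∧ (e ≤ x ↔ e ≤ y) := by
  rcases le_total x y with hxy | hxy
  · exact posCount_eq_aux E hxy h he
  · have := posCount_eq_aux E hxy h.symm he
    exact ⟨this.1.symm, this.2.symm⟩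

theorem cellLabel_refine (E : Finset ℝ) (n : ℕ) {x y : ℝ}
    (h : cellLabel E (n + 1) x = cellLabel E (n + 1) y) : cellLabel E n x = cellLabel E n y := by
  obtain ⟨h1, h2⟩ := cellLabel_eq E (n + 1) h
  have key : ∀ z : ℝ, ⌊(2 : ℝ) ^ n * z⌋ = ⌊(2 : ℝ) ^ (n + 1) * z⌋ / 2 := by
    intro z
    have := Int.floor_div_natCast ((2 : ℝ) ^ (n + 1) * z) 2
    push_cast at this
    rw [← this]
    congr 1
    ring
  unfold cellLabel
  rw [key x, key y, h1, h2]

theorem isStepFun_of_label (L : ℝ → ℤ) (hL : Monotone L) (h : ℤ → ℝ) (R : ℝ)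
    (hR : ∀ x, x ∉ Set.Icc (-R) R → h (L x) = 0) : IsStepFun (fun x => h (L x)) := by
  have : (fun x => h (L x)) = ∑ k ∈ Finset.Icc (L (-R)) (L R),
      h k • (L ⁻¹' {k} ∩ Set.Icc (-R) R).indicator (1 : ℝ → ℝ) := by
    funext x
    rw [Finset.sum_apply]
    by_cases hx : x ∈ Set.Icc (-R) R
    · rw [Finset.sum_eq_single (L x)]
      · simp [Set.indicator, hx.1, hx.2]
      · intro b _ hb
        simp [Set.indicator, hb.symm]
      · intro hn
        exact absurd (Finset.mem_Icc.2 ⟨hL hx.1, hL hx.2⟩) hn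
    · rw [hR x hx, Finset.sum_eq_zero]
      intro k _
      have : x ∉ L ⁻¹' {k} ∩ Set.Icc (-R) R := fun hh => hx hh.2
      rw [Pi.smul_apply, Set.indicator_of_notMem this, smul_zero]
  unfold IsStepFun
  rw [this]
  refine Submodule.sum_mem _ fun k _ => Submodule.smul_mem _ _ (Submodule.subset_span ?_)
  refine ⟨_, ⟨?_, ?_, ?_⟩, rfl⟩
  · exact (Set.ordConnected_singleton.preimage_mono hL).inter Set.ordConnected_Icc
  · exact bddAbove_Icc.mono Set.inter_subset_right
  · exact bddBelow_Icc.mono Set.inter_subset_right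

theorem exists_stepFun_seq_up (f : ℝ → ℝ)
    (hbd : ∃ M : ℝ, ∀ x, |f x| ≤ M)
    (hsupp : ∃ R : ℝ, ∀ x, R < |x| → f x = 0)
    (hcont : ∃ E : Finset ℝ, ∀ x ∉ E, ContinuousAt f x) :
    ∃ g : ℕ → ℝ → ℝ, (∀ n, IsStepFun (g n)) ∧ (∀ n x, g n x ≤ g (n + 1) x) ∧
      ∀ x, Tendsto (fun n => g n x) atTop (𝓝 (f x)) := by
  obtain ⟨M, hM⟩ := hbd
  obtain ⟨R, hR⟩ := hsupp
  obtain ⟨E₀, hE₀⟩ := hcont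
  obtain ⟨E, hRE, hRE2, hE⟩ : ∃ E : Finset ℝ, R ∈ E ∧ -R ∈ E ∧ ∀ x ∉ E, ContinuousAt f x := by
    refine ⟨insert R (insert (-R) E₀), by simp, by simp, fun x hx => hE₀ x ?_⟩
    simp only [Finset.mem_insert, not_or] at hx
    exact hx.2.2
  have hbb : ∀ s : Set ℝ, BddBelow (f '' s) := by
    rintro s
    refine ⟨-M, ?_⟩
    rintro _ ⟨y, _, rfl⟩
    exact (abs_le.1 (hM y)).1
  have hne : ∀ n x, (f '' {y | cellLabel E n y = cellLabel E n x}).Nonempty :=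
    fun n x => ⟨f x, x, rfl, rfl⟩
  refine ⟨fun n x => sInf (f '' {y | cellLabel E n y = cellLabel E n x}), ?_, ?_, ?_⟩
  · intro n
    refine isStepFun_of_label (cellLabel E n) (cellLabel_mono E n)
      (fun k => sInf (f '' {y | cellLabel E n y = k})) R ?_
    intro x hx
    have hz : ∀ y, cellLabel E n y = cellLabel E n x → f y = 0 := by
      intro y hy
      have hp := (cellLabel_eq E n hy).2
      apply hR
      rw [lt_abs]
      by_cases h1 : R < x
      · exact Or.inl ((posCount_eq E hp hRE).1.2 h1)
      · right
        have h2 : ¬ (-R ≤ x) := fun h2 => hx ⟨h2, not_lt.1 h1⟩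
        have h3 := mt (posCount_eq E hp hRE2).2.1 h2
        linarith [not_le.1 h3]
    have : f '' {y | cellLabel E n y = cellLabel E n x} = {0} := by
      refine Set.eq_singleton_iff_nonempty_unique_mem.2 ⟨hne n x, ?_⟩
      rintro _ ⟨y, hy, rfl⟩
      exact hz y hy
    simp only [this, csInf_singleton]
  · intro n x
    exact csInf_le_csInf (hbb _) (hne _ _)
      (Set.image_mono fun y hy => cellLabel_refine E n hy)
  · intro x
    have key : ∀ ε > 0, ∀ᶠ n in atTop, ∀ y, cellLabel E n y = cellLabel E n x → f x - ε ≤ f y := by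
      intro ε hε
      by_cases hx : x ∈ E
      · refine Eventually.of_forall fun n y hy => ?_
        have h1 := posCount_eq E (cellLabel_eq E n hy).2 hx
        have h2 : y = x := le_antisymm
          (not_lt.1 fun h => lt_irrefl x (h1.1.1 h)) (h1.2.2 le_rfl)
        rw [h2]
        linarith
      · obtain ⟨δ, hδ, h⟩ := Metric.continuousAt_iff.1 (hE x hx) ε hε
        have ht : Tendsto (fun n : ℕ => (2 : ℝ) ^ n) atTop atTop :=
          tendsto_pow_atTop_atTop_of_one_lt one_lt_two
        filter_upwards [ht.eventually_gt_atTop (1 / δ)] with n hn y hy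
        have h1 := Int.abs_sub_lt_one_of_floor_eq_floor (cellLabel_eq E n hy).1
        have hp : (0 : ℝ) < 2 ^ n := by positivity
        rw [← mul_sub, abs_mul, abs_of_pos hp] at h1
        have h2 : |y - x| < δ := by
          rw [div_lt_iff₀ hδ] at hn
          exact lt_of_mul_lt_mul_left (h1.trans hn) hp.le
        have h3 := h (x := y) (by rwa [Real.dist_eq])
        rw [Real.dist_eq] at h3
        linarith [(abs_lt.1 h3).1]
    rw [Metric.tendsto_nhds]
    intro ε hε
    filter_upwards [key (ε / 2) (half_pos hε)] with n hn
    have h1 : sInf (f '' {y | cellLabel E n y = cellLabel E n x}) ≤ f x :=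
      csInf_le (hbb _) ⟨x, rfl, rfl⟩
    have h2 : f x - ε / 2 ≤ sInf (f '' {y | cellLabel E n y = cellLabel E n x}) := by
      refine le_csInf (hne n x) ?_
      rintro _ ⟨y, hy, rfl⟩
      exact hn y hy
    rw [Real.dist_eq, abs_lt]
    constructor <;> linarith

/-- If `f : ℝ → ℝ` is bounded, vanishes outside a bounded set, and is continuous except at
finitely many points, then there are a sequence of step functions increasing pointwise to `f`
and a sequence of step functions decreasing pointwise to `f`. -/
theorem exists_stepFun_seq_up_down (f : ℝ → ℝ)
    (hbd : ∃ M : ℝ, ∀ x, |f x| ≤ M)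
    (hsupp : ∃ R : ℝ, ∀ x, R < |x| → f x = 0)
    (hcont : ∃ E : Finset ℝ, ∀ x ∉ E, ContinuousAt f x) :
    (∃ g : ℕ → ℝ → ℝ, (∀ n, IsStepFun (g n)) ∧ (∀ n x, g n x ≤ g (n + 1) x) ∧
      ∀ x, Tendsto (fun n => g n x) atTop (𝓝 (f x))) ∧
    (∃ g : ℕ → ℝ → ℝ, (∀ n, IsStepFun (g n)) ∧ (∀ n x, g (n + 1) x ≤ g n x) ∧
      ∀ x, Tendsto (fun n => g n x) atTop (𝓝 (f x))) := by
  refine ⟨exists_stepFun_seq_up f hbd hsupp hcont, ?_⟩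
  obtain ⟨M, hM⟩ := hbd
  obtain ⟨R, hR⟩ := hsupp
  obtain ⟨E, hE⟩ := hcont
  obtain ⟨g, h1, h2, h3⟩ := exists_stepFun_seq_up (fun x => -f x)
    ⟨M, fun x => by rw [abs_neg]; exact hM x⟩ ⟨R, fun x hx => by rw [hR x hx, neg_zero]⟩
    ⟨E, fun x hx => (hE x hx).neg⟩
  refine ⟨fun n => -g n, fun n => Submodule.neg_mem _ (h1 n),
    fun n x => neg_le_neg (h2 n x), fun x => ?_⟩
  simpa using (h3 x).neg
end

section
/- Let (L, I) be an integral system on a set X and let (f_n) and (g_n) be increasing sequences in L such that lim_n f_n(x) ≤ lim_n g_n(x) for every x ∈ X, the limits being taken in (−∞,∞]. Then lim_n I(f_n) ≤ lim_n I(g_n) in (−∞,∞]. -/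
open Filter Topology

/-- An integral system on a set `X`: a linear lattice `L` of real-valued functions on `X`
(a vector subspace of `ℝ^X` closed under pointwise max and min) together with a
preintegral `I` on it (a positive linear functional that is continuous in the sense that
`I fₙ → 0` whenever `fₙ ∈ L` are nonnegative and decrease pointwise to `0`). -/
structure IntegralSystem (X : Type*) where
  L : Set (X → ℝ)
  I : (X → ℝ) → ℝ
  zero_mem : (0 : X → ℝ) ∈ L
  add_mem : ∀ ⦃f g : X → ℝ⦄, f ∈ L → g ∈ L → f + g ∈ L
  smul_mem : ∀ (c : ℝ) ⦃f : X → ℝ⦄, f ∈ L → c • f ∈ L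
  sup_mem : ∀ ⦃f g : X → ℝ⦄, f ∈ L → g ∈ L → f ⊔ g ∈ L
  inf_mem : ∀ ⦃f g : X → ℝ⦄, f ∈ L → g ∈ L → f ⊓ g ∈ L
  I_add : ∀ ⦃f g : X → ℝ⦄, f ∈ L → g ∈ L → I (f + g) = I f + I g
  I_smul : ∀ (c : ℝ) ⦃f : X → ℝ⦄, f ∈ L → I (c • f) = c * I f
  I_pos : ∀ ⦃f : X → ℝ⦄, f ∈ L → (∀ x, 0 ≤ f x) → 0 ≤ I f
  I_cont : ∀ f : ℕ → X → ℝ, (∀ n, f n ∈ L) → (∀ n x, 0 ≤ f n x) →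
    (∀ n x, f (n + 1) x ≤ f n x) →
    (∀ x, Tendsto (fun n => f n x) atTop (𝓝 0)) →
    Tendsto (fun n => I (f n)) atTop (𝓝 0)

variable {X : Type*}

/-- `f : X → (−∞,∞]` belongs to `L_↑` iff some sequence in `L` increases pointwise to `f`. -/
def MemLup (S : IntegralSystem X) (f : X → EReal) : Prop :=
  ∃ g : ℕ → X → ℝ, (∀ n, g n ∈ S.L) ∧ (∀ n x, g n x ≤ g (n + 1) x) ∧
    ∀ x, Tendsto (fun n => ((g n x : EReal))) atTop (𝓝 (f x))

/-- For `f ∈ L_↑`, `I_↑ f = lim I (g n)` for any sequence `(g n)` in `L` increasing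
pointwise to `f`; the value does not depend on the chosen sequence, so we may define it as
the supremum of all such limits. -/
noncomputable def Iup (S : IntegralSystem X) (f : X → EReal) : EReal :=
  sSup { c : EReal | ∃ g : ℕ → X → ℝ, (∀ n, g n ∈ S.L) ∧ (∀ n x, g n x ≤ g (n + 1) x) ∧
    (∀ x, Tendsto (fun n => ((g n x : EReal))) atTop (𝓝 (f x))) ∧
    Tendsto (fun n => ((S.I (g n) : EReal))) atTop (𝓝 c) }

/-- `L_↓ = −L_↑`. -/
def MemLdown (S : IntegralSystem X) (f : X → EReal) : Prop :=
  MemLup S (fun x => -(f x))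

/-- `I_↓ f = −I_↑(−f)`. -/
noncomputable def Idown (S : IntegralSystem X) (f : X → EReal) : EReal :=
  -(Iup S (fun x => -(f x)))

/-- The upper integral `Ī f = inf { I_↑ g : g ∈ L_↑, f ≤ g }` (with `inf ∅ = ∞`). -/
noncomputable def upperInt (S : IntegralSystem X) (f : X → EReal) : EReal :=
  sInf (Iup S '' { g | MemLup S g ∧ ∀ x, f x ≤ g x })

/-- The lower integral `I̲ f = sup { I_↓ g : g ∈ L_↓, g ≤ f }` (with `sup ∅ = −∞`). -/
noncomputable def lowerInt (S : IntegralSystem X) (f : X → EReal) : EReal :=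
  sSup (Idown S '' { g | MemLdown S g ∧ ∀ x, g x ≤ f x })

/-- `f : X → ℝ` is `I`-integrable iff its lower and upper integrals coincide and are finite. -/
def Integrable1 (S : IntegralSystem X) (f : X → ℝ) : Prop :=
  ∃ c : ℝ, lowerInt S (fun x => ((f x : EReal))) = (c : EReal) ∧
    upperInt S (fun x => ((f x : EReal))) = (c : EReal)

/-- The Daniell extension `I¹` of `I`: the common value of the lower and upper integrals of
an integrable function. -/
noncomputable def Int1 (S : IntegralSystem X) (f : X → ℝ) : ℝ :=
  (upperInt S (fun x => ((f x : EReal)))).toReal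

/-- If increasing sequences `(f n)` and `(g n)` in `L` have pointwise limits `F ≤ G`
(limits taken in `(−∞,∞]`), then `lim I (f n) ≤ lim I (g n)` in `(−∞,∞]`. -/
theorem lim_I_mono (S : IntegralSystem X) (f g : ℕ → X → ℝ)
    (hfL : ∀ n, f n ∈ S.L) (hgL : ∀ n, g n ∈ S.L)
    (hfmono : ∀ n x, f n x ≤ f (n + 1) x) (hgmono : ∀ n x, g n x ≤ g (n + 1) x)
    (F G : X → EReal)
    (hF : ∀ x, Tendsto (fun n => ((f n x : EReal))) atTop (𝓝 (F x)))
    (hG : ∀ x, Tendsto (fun n => ((g n x : EReal))) atTop (𝓝 (G x)))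
    (hle : ∀ x, F x ≤ G x)
    (a b : EReal)
    (ha : Tendsto (fun n => ((S.I (f n) : EReal))) atTop (𝓝 a))
    (hb : Tendsto (fun n => ((S.I (g n) : EReal))) atTop (𝓝 b)) :
    a ≤ b := by
  refine le_of_tendsto' ha fun m => ?_
  have hhL : ∀ n, (f m + (-1 : ℝ) • g n) ⊔ 0 ∈ S.L := fun n =>
    S.sup_mem (S.add_mem (hfL m) (S.smul_mem _ (hgL n))) S.zero_mem
  have hfF : ∀ x, (f m x : EReal) ≤ F x := fun x => by
    have hm : Monotone (fun n => (f n x : EReal)) :=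
      monotone_nat_of_le_succ fun n => EReal.coe_le_coe_iff.2 (hfmono n x)
    exact hm.ge_of_tendsto (hF x) m
  have hlim : Tendsto (fun n => S.I ((f m + (-1 : ℝ) • g n) ⊔ 0)) atTop (𝓝 0) := by
    refine S.I_cont (fun n => (f m + (-1 : ℝ) • g n) ⊔ 0) hhL ?_ ?_ ?_
    · intro n x
      simp
    · intro n x
      have := hgmono n x
      simp only [Pi.sup_apply, Pi.add_apply, Pi.smul_apply, Pi.zero_apply, smul_eq_mul]
      exact max_le_max (by linarith) le_rfl
    · intro x
      rw [tendsto_order]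
      constructor
      · intro c hc
        refine Eventually.of_forall fun n => lt_of_lt_of_le hc ?_
        simp
      · intro c hc
        have h1 : ((f m x - c : ℝ) : EReal) < G x :=
          lt_of_lt_of_le (EReal.coe_lt_coe_iff.2 (by linarith)) ((hfF x).trans (hle x))
        filter_upwards [(hG x).eventually (lt_mem_nhds h1)] with n hn
        have hn' := EReal.coe_lt_coe_iff.1 hn
        simp only [Pi.sup_apply, Pi.add_apply, Pi.smul_apply, Pi.zero_apply, smul_eq_mul]
        exact max_lt (by linarith) hc
  have hlim2 : Tendsto (fun n => ((S.I (f m) - S.I ((f m + (-1 : ℝ) • g n) ⊔ 0) : ℝ) : EReal))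
      atTop (𝓝 ((S.I (f m) : ℝ) : EReal)) := by
    have h := (tendsto_const_nhds (x := S.I (f m))).sub hlim
    rw [sub_zero] at h
    exact (continuous_coe_real_ereal.tendsto _).comp h
  refine le_of_tendsto_of_tendsto' hlim2 hb fun n => EReal.coe_le_coe_iff.2 ?_
  have hs := S.add_mem (hhL n) (hgL n)
  have hfs := S.smul_mem (-1) (hfL m)
  have h := S.I_pos (S.add_mem hs hfs) (fun x => by
    have := le_max_left (f m x + -1 * g n x) 0
    simp only [Pi.sup_apply, Pi.add_apply, Pi.smul_apply, Pi.zero_apply, smul_eq_mul]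
    linarith)
  rw [S.I_add hs hfs, S.I_add (hhL n) (hgL n), S.I_smul _ (hfL m)] at h
  linarith
end

section
/- Let (L, I) be an integral system on a set X. If (f_n) is a sequence in L_↑ increasing pointwise to a function f : X → (−∞,∞], then f ∈ L_↑ and I_↑(f_n) → I_↑(f) in (−∞,∞]. -/
open Filter Topology

variable {X : Type*}

theorem IS_I_mono (S : IntegralSystem X) {f g : X → ℝ} (hf : f ∈ S.L) (hg : g ∈ S.L)
    (h : ∀ x, f x ≤ g x) : S.I f ≤ S.I g := by
  have h1 := S.smul_mem (-1) hf
  have h2 := S.I_pos (S.add_mem hg h1) (fun x => by simpa using h x)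
  rw [S.I_add hg h1, S.I_smul _ hf] at h2
  linarith

theorem IS_key (S : IntegralSystem X) {g : ℕ → X → ℝ} {f : X → EReal} {h : X → ℝ}
    (hg : ∀ n, g n ∈ S.L) (hm : ∀ n x, g n x ≤ g (n + 1) x)
    (hl : ∀ x, Tendsto (fun n => ((g n x : EReal))) atTop (𝓝 (f x)))
    (hh : h ∈ S.L) (hle : ∀ x, (h x : EReal) ≤ f x) :
    (S.I h : EReal) ≤ ⨆ n, (S.I (g n) : EReal) := by
  have hi : ∀ n, h ⊓ g n ∈ S.L := fun n => S.inf_mem hh (hg n)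
  have hni : ∀ n, (-1 : ℝ) • (h ⊓ g n) ∈ S.L := fun n => S.smul_mem _ (hi n)
  have hc := S.I_cont (fun n => h + (-1 : ℝ) • (h ⊓ g n)) (fun n => S.add_mem hh (hni n))
    (fun n x => by simp) (fun n x => by
      have := hm n x
      simp only [Pi.add_apply, Pi.smul_apply, Pi.inf_apply, smul_eq_mul]
      have : h x ⊓ g n x ≤ h x ⊓ g (n+1) x := inf_le_inf_left _ this
      linarith) (fun x => by
      have h1 : Tendsto (fun n => ((h x ⊓ g n x : ℝ) : EReal)) atTop (𝓝 ((h x : ℝ) : EReal)) := by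
        have := (tendsto_const_nhds (x := (h x : EReal)) (f := atTop)).min (hl x)
        rw [min_eq_left (hle x)] at this
        refine this.congr fun n => ?_
        exact (EReal.coe_strictMono.monotone.map_min).symm
      rw [EReal.tendsto_coe] at h1
      have h2 := (tendsto_const_nhds (x := h x) (f := atTop)).sub h1
      simp only [sub_self] at h2
      refine h2.congr fun n => ?_
      simp only [Pi.add_apply, Pi.smul_apply, Pi.inf_apply, smul_eq_mul]
      ring)
  have hc2 : Tendsto (fun n => S.I (h ⊓ g n)) atTop (𝓝 (S.I h)) := by
    have h2 := (tendsto_const_nhds (x := S.I h) (f := atTop)).sub hc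
    simp only [sub_zero] at h2
    refine h2.congr fun n => ?_
    rw [S.I_add hh (hni n), S.I_smul _ (hi n)]
    ring
  refine le_of_tendsto' (EReal.tendsto_coe.2 hc2) fun n => ?_
  refine le_trans ?_ (le_iSup (fun n => (S.I (g n) : EReal)) n)
  exact EReal.coe_le_coe_iff.2 (IS_I_mono S (hi n) (hg n) fun x => inf_le_right)

theorem IS_tendsto (S : IntegralSystem X) {g : ℕ → X → ℝ}
    (hg : ∀ n, g n ∈ S.L) (hm : ∀ n x, g n x ≤ g (n + 1) x) :
    Tendsto (fun n => (S.I (g n) : EReal)) atTop (𝓝 (⨆ n, (S.I (g n) : EReal))) :=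
  tendsto_atTop_iSup (monotone_nat_of_le_succ fun n =>
    EReal.coe_le_coe_iff.2 (IS_I_mono S (hg n) (hg (n+1)) (hm n)))

theorem IS_le_lim {g : ℕ → X → ℝ} {f : X → EReal} (hm : ∀ n x, g n x ≤ g (n + 1) x)
    (hl : ∀ x, Tendsto (fun n => ((g n x : EReal))) atTop (𝓝 (f x))) (n : ℕ) (x : X) :
    (g n x : EReal) ≤ f x :=
  (monotone_nat_of_le_succ (f := fun n => (g n x : EReal)) fun n =>
    EReal.coe_le_coe_iff.2 (hm n x)).ge_of_tendsto (hl x) n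

theorem IS_Iup_eq (S : IntegralSystem X) {g : ℕ → X → ℝ} {f : X → EReal}
    (hg : ∀ n, g n ∈ S.L) (hm : ∀ n x, g n x ≤ g (n + 1) x)
    (hl : ∀ x, Tendsto (fun n => ((g n x : EReal))) atTop (𝓝 (f x))) :
    Iup S f = ⨆ n, (S.I (g n) : EReal) := by
  apply le_antisymm
  · refine sSup_le ?_
    rintro c ⟨k, hk, hkm, hkl, hkc⟩
    exact le_of_tendsto' hkc fun n => IS_key S hg hm hl (hk n) (IS_le_lim hkm hkl n)
  · exact le_sSup ⟨g, hg, hm, hl, IS_tendsto S hg hm⟩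

theorem IS_le_Iup (S : IntegralSystem X) {f : X → EReal} {h : X → ℝ} (hf : MemLup S f)
    (hh : h ∈ S.L) (hle : ∀ x, (h x : EReal) ≤ f x) : (S.I h : EReal) ≤ Iup S f := by
  obtain ⟨g, hg, hm, hl⟩ := hf
  rw [IS_Iup_eq S hg hm hl]
  exact IS_key S hg hm hl hh hle

theorem IS_Iup_mono (S : IntegralSystem X) {f f' : X → EReal} (hf : MemLup S f)
    (hf' : MemLup S f') (hle : ∀ x, f x ≤ f' x) : Iup S f ≤ Iup S f' := by
  obtain ⟨g, hg, hm, hl⟩ := hf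
  rw [IS_Iup_eq S hg hm hl]
  exact iSup_le fun n => IS_le_Iup S hf' (hg n) fun x => (IS_le_lim hm hl n x).trans (hle x)

/-- If a sequence `(f n)` in `L_↑` increases pointwise to `F : X → (−∞,∞]`, then
`F ∈ L_↑` and `I_↑ (f n) → I_↑ F` in `(−∞,∞]`. -/
theorem memLup_of_increasing_limit (S : IntegralSystem X) (f : ℕ → X → EReal) (F : X → EReal)
    (hf : ∀ n, MemLup S (f n))
    (hmono : ∀ n x, f n x ≤ f (n + 1) x)
    (hlim : ∀ x, Tendsto (fun n => f n x) atTop (𝓝 (F x))) :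
    MemLup S F ∧ Tendsto (fun n => Iup S (f n)) atTop (𝓝 (Iup S F)) := by
  choose g hg hm hl using hf
  have hfm : ∀ x, Monotone fun n => f n x := fun x => monotone_nat_of_le_succ fun n => hmono n x
  have hfF : ∀ n x, f n x ≤ F x := fun n x => (hfm x).ge_of_tendsto (hlim x) n
  let h : ℕ → X → ℝ := fun k => partialSups (fun n => g n k) k
  have hL : ∀ k, h k ∈ S.L := by
    intro k
    have : ∀ j, partialSups (fun n => g n k) j ∈ S.L := by
      intro j
      induction j with
      | zero => simpa using hg 0 k
      | succ j ih => rw [partialSups_add_one]; exact S.sup_mem ih (hg _ _)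
    exact this k
  have hhm : ∀ k x, h k x ≤ h (k + 1) x := by
    intro k
    have h1 : h k ≤ partialSups (fun n => g n (k+1)) k :=
      partialSups_mono (fun n x => hm n k x) k
    exact h1.trans ((partialSups _).monotone (Nat.le_succ k))
  have hhf : ∀ k x, (h k x : EReal) ≤ f k x := by
    intro k
    have : ∀ j ≤ k, ∀ x, (partialSups (fun n => g n k) j x : EReal) ≤ f k x := by
      intro j
      induction j with
      | zero =>
        intro _ x
        simpa using (IS_le_lim (hm 0) (hl 0) k x).trans (hfm x (Nat.zero_le k))
      | succ j ih =>
        intro hj x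
        rw [partialSups_add_one, Pi.sup_apply, EReal.coe_strictMono.monotone.map_sup]
        exact sup_le (ih (by omega) x) ((IS_le_lim (hm _) (hl _) k x).trans (hfm x hj))
    exact this k le_rfl
  have hgh : ∀ n k x, n ≤ k → g n k x ≤ h k x := fun n k x hnk =>
    le_partialSups_of_le (fun n => g n k) hnk x
  have hhF : ∀ x, Tendsto (fun k => (h k x : EReal)) atTop (𝓝 (F x)) := by
    intro x
    have hmon : Monotone fun k => (h k x : EReal) :=
      monotone_nat_of_le_succ fun k => EReal.coe_le_coe_iff.2 (hhm k x)
    have ht := tendsto_atTop_iSup hmon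
    have : (⨆ k, (h k x : EReal)) = F x := by
      apply le_antisymm
      · exact iSup_le fun k => (hhf k x).trans (hfF k x)
      · refine le_of_tendsto' (hlim x) fun n => ?_
        refine le_of_tendsto (hl n x) ?_
        filter_upwards [eventually_ge_atTop n] with k hk
        exact (EReal.coe_le_coe_iff.2 (hgh n k x hk)).trans
          (le_iSup (fun k => (h k x : EReal)) k)
    rwa [this] at ht
  have hF : MemLup S F := ⟨h, hL, hhm, hhF⟩
  have hfM : ∀ n, MemLup S (f n) := fun n => ⟨g n, hg n, hm n, hl n⟩
  refine ⟨hF, ?_⟩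
  have ht := tendsto_atTop_iSup (monotone_nat_of_le_succ (f := fun n => Iup S (f n))
    fun n => IS_Iup_mono S (hfM n) (hfM (n+1)) (hmono n))
  have : (⨆ n, Iup S (f n)) = Iup S F := by
    apply le_antisymm
    · exact iSup_le fun n => IS_Iup_mono S (hfM n) hF (hfF n)
    · rw [IS_Iup_eq S hL hhm hhF]
      exact iSup_mono fun k => IS_le_Iup S (hfM k) (hL k) (hhf k)
  rwa [this] at ht
end

section
/- Let (L, I) be an integral system on a set X. Then the set L¹ of I-integrable functions is a real vector subspace of ℝ^X closed under pointwise maximum and minimum, it contains L, and the Daniell extension I¹ : L¹ → ℝ is linear, positive (I¹(f) ≥ 0 whenever f ∈ L¹ satisfies f ≥ 0 pointwise), and satisfies I¹(f) = I(f) for every f ∈ L. -/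
open Filter Topology

variable {X : Type*}

namespace DaniellAux

lemma neg_mem (S : IntegralSystem X) {f : X → ℝ} (hf : f ∈ S.L) : -f ∈ S.L := by
  have := S.smul_mem (-1) hf
  rwa [neg_one_smul] at this

lemma I_neg (S : IntegralSystem X) {f : X → ℝ} (hf : f ∈ S.L) : S.I (-f) = - S.I f := by
  have := S.I_smul (-1) hf
  rw [neg_one_smul] at this
  linarith

lemma sub_mem (S : IntegralSystem X) {f g : X → ℝ} (hf : f ∈ S.L) (hg : g ∈ S.L) :
    f - g ∈ S.L := by
  rw [sub_eq_add_neg]; exact S.add_mem hf (neg_mem S hg)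

lemma I_sub (S : IntegralSystem X) {f g : X → ℝ} (hf : f ∈ S.L) (hg : g ∈ S.L) :
    S.I (f - g) = S.I f - S.I g := by
  rw [sub_eq_add_neg, S.I_add hf (neg_mem S hg), I_neg S hg]; ring

lemma I_mono (S : IntegralSystem X) {f g : X → ℝ} (hf : f ∈ S.L) (hg : g ∈ S.L)
    (h : ∀ x, f x ≤ g x) : S.I f ≤ S.I g := by
  have := S.I_pos (sub_mem S hg hf) (fun x => by simpa using h x)
  rw [I_sub S hg hf] at this
  linarith

lemma I_zero (S : IntegralSystem X) : S.I 0 = 0 := by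
  have := S.I_smul 0 S.zero_mem
  simpa using this

/-- Key lemma. -/
lemma key (S : IntegralSystem X) {g : X → ℝ} (hg : g ∈ S.L) {u : ℕ → X → ℝ}
    (hu : ∀ n, u n ∈ S.L) (hm : ∀ x, Monotone (fun n => u n x))
    (hd : ∀ x a, a < g x → ∃ n, a < u n x) {b : ℝ} (hb : ∀ n, S.I (u n) ≤ b) :
    S.I g ≤ b := by
  have hmem : ∀ n, g - g ⊓ u n ∈ S.L := fun n => sub_mem S hg (S.inf_mem hg (hu n))
  have h := S.I_cont (fun n => g - g ⊓ u n) hmem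
    (fun n x => by simp)
    (fun n x => by
      have := hm x (Nat.le_succ n)
      simp only [Pi.sub_apply, Pi.inf_apply]
      exact sub_le_sub_left (inf_le_inf_left _ this) _)
    (fun x => by
      rw [Metric.tendsto_atTop]
      intro ε hε
      obtain ⟨N, hN⟩ := hd x (g x - ε) (by linarith)
      refine ⟨N, fun n hn => ?_⟩
      have h1 : u N x ≤ u n x := hm x hn
      simp only [Pi.sub_apply, Pi.inf_apply, Real.dist_eq, sub_zero]
      rw [abs_of_nonneg (by simp)]
      have : g x - ε < g x ⊓ u n x := lt_inf_iff.2 ⟨by linarith, by linarith⟩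
      linarith)
  have h2 : ∀ n, S.I g - b ≤ S.I (g - g ⊓ u n) := by
    intro n
    rw [I_sub S hg (S.inf_mem hg (hu n))]
    have := I_mono S (S.inf_mem hg (hu n)) (hu n) (fun x => inf_le_right)
    have := hb n
    linarith
  have := ge_of_tendsto' h h2
  linarith

/-- `f` is dominated by an increasing limit with integrals at most `b`. -/
def U (S : IntegralSystem X) (f : X → ℝ) (b : ℝ) : Prop :=
  ∃ u : ℕ → X → ℝ, (∀ n, u n ∈ S.L) ∧ (∀ x, Monotone (fun n => u n x)) ∧
    (∀ x a, a < f x → ∃ n, a < u n x) ∧ ∀ n, S.I (u n) ≤ b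

lemma U_mono {S : IntegralSystem X} {f : X → ℝ} {b b' : ℝ} (h : U S f b) (hb : b ≤ b') :
    U S f b' := by
  obtain ⟨u, h1, h2, h3, h4⟩ := h
  exact ⟨u, h1, h2, h3, fun n => (h4 n).trans hb⟩

lemma dom_add {f g : ℝ} {u v : ℕ → ℝ} (hu : Monotone u) (hv : Monotone v)
    (h1 : ∀ a, a < f → ∃ n, a < u n) (h2 : ∀ a, a < g → ∃ n, a < v n) :
    ∀ a, a < f + g → ∃ n, a < u n + v n := by
  intro a ha
  obtain ⟨n, hn⟩ := h1 (f - (f + g - a) / 2) (by linarith)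
  obtain ⟨m, hm⟩ := h2 (g - (f + g - a) / 2) (by linarith)
  have := hu (le_max_left n m)
  have := hv (le_max_right n m)
  exact ⟨max n m, by linarith⟩

lemma U_add {S : IntegralSystem X} {f g : X → ℝ} {b b' : ℝ} (h : U S f b) (h' : U S g b') :
    U S (f + g) (b + b') := by
  obtain ⟨u, h1, h2, h3, h4⟩ := h
  obtain ⟨v, k1, k2, k3, k4⟩ := h'
  refine ⟨fun n => u n + v n, fun n => S.add_mem (h1 n) (k1 n),
    fun x => (h2 x).add (k2 x), fun x => dom_add (h2 x) (k2 x) (h3 x) (k3 x), fun n => ?_⟩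
  rw [S.I_add (h1 n) (k1 n)]
  exact add_le_add (h4 n) (k4 n)

lemma U_smul {S : IntegralSystem X} {f : X → ℝ} {b c : ℝ} (hc : 0 < c) (h : U S f b) :
    U S (c • f) (c * b) := by
  obtain ⟨u, h1, h2, h3, h4⟩ := h
  refine ⟨fun n => c • u n, fun n => S.smul_mem c (h1 n), fun x n m hnm => ?_, fun x a ha => ?_,
    fun n => ?_⟩
  · exact mul_le_mul_of_nonneg_left (h2 x hnm) hc.le
  · obtain ⟨n, hn⟩ := h3 x (a / c) (by
      rw [div_lt_iff₀ hc]; simpa [mul_comm] using ha)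
    refine ⟨n, ?_⟩
    rw [div_lt_iff₀ hc] at hn
    simpa [mul_comm] using hn
  · rw [S.I_smul c (h1 n)]
    exact mul_le_mul_of_nonneg_left (h4 n) hc.le

lemma U_nonneg {S : IntegralSystem X} {f : X → ℝ} {b : ℝ} (h : U S f b) (hf : ∀ x, 0 ≤ f x) :
    0 ≤ b := by
  obtain ⟨u, h1, h2, h3, h4⟩ := h
  have := key S S.zero_mem h1 h2 (fun x a ha => h3 x a (lt_of_lt_of_le ha (hf x))) h4
  rwa [I_zero] at this

lemma U_neg {S : IntegralSystem X} {f : X → ℝ} {b b' : ℝ} (h : U S f b) (h' : U S (-f) b') :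
    0 ≤ b + b' :=
  U_nonneg (U_add h h') (fun x => by simp)

lemma U_of_mem {S : IntegralSystem X} {f : X → ℝ} (h : f ∈ S.L) : U S f (S.I f) :=
  ⟨fun _ => f, fun _ => h, fun _ => monotone_const, fun _ _ ha => ⟨0, ha⟩, fun _ => le_rfl⟩

lemma upper_le {S : IntegralSystem X} {f : X → ℝ} {b : ℝ} (h : U S f b) :
    upperInt S (fun x => (f x : EReal)) ≤ b := by
  obtain ⟨u, h1, h2, h3, h4⟩ := h
  set G : X → EReal := fun x => ⨆ n, (u n x : EReal) with hG
  have hfG : ∀ x, (f x : EReal) ≤ G x := by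
    intro x
    by_contra hcon
    push Not at hcon
    obtain ⟨a, ha1, ha2⟩ := EReal.lt_iff_exists_real_btwn.1 hcon
    obtain ⟨n, hn⟩ := h3 x a (EReal.coe_lt_coe_iff.1 ha2)
    have : (u n x : EReal) ≤ G x := le_iSup (fun n => (u n x : EReal)) n
    exact absurd (EReal.coe_lt_coe_iff.2 hn) (not_lt.2 (this.trans ha1.le))
  have hmem : MemLup S G := by
    refine ⟨u, h1, fun n x => h2 x (Nat.le_succ n), fun x => ?_⟩
    exact tendsto_atTop_iSup (fun n m hnm => EReal.coe_le_coe_iff.2 (h2 x hnm))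
  have hle : upperInt S (fun x => (f x : EReal)) ≤ Iup S G :=
    sInf_le ⟨G, ⟨hmem, hfG⟩, rfl⟩
  refine hle.trans ?_
  refine sSup_le ?_
  rintro c ⟨g, g1, g2, g3, g4⟩
  refine le_of_tendsto' g4 (fun n => EReal.coe_le_coe_iff.2 ?_)
  refine key S (g1 n) h1 h2 (fun x a ha => ?_) h4
  have hmono : Monotone (fun n => (g n x : EReal)) :=
    monotone_nat_of_le_succ (fun n => EReal.coe_le_coe_iff.2 (g2 n x))
  have h5 : (g n x : EReal) ≤ G x := hmono.ge_of_tendsto (g3 x) n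
  obtain ⟨m, hm⟩ := lt_iSup_iff.1 (lt_of_lt_of_le (EReal.coe_lt_coe_iff.2 ha) h5)
  exact ⟨m, EReal.coe_lt_coe_iff.1 hm⟩

lemma U_of_upper_lt {S : IntegralSystem X} {f : X → ℝ} {b : ℝ}
    (h : upperInt S (fun x => (f x : EReal)) < b) : U S f b := by
  obtain ⟨_, ⟨G, ⟨⟨w, w1, w2, w3⟩, hfG⟩, rfl⟩, hlt⟩ := sInf_lt_iff.1 h
  have wm : ∀ x, Monotone (fun n => w n x) := fun x => monotone_nat_of_le_succ (fun n => w2 n x)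
  refine ⟨w, w1, wm, fun x a ha => ?_, fun n => ?_⟩
  · have : (a : EReal) < G x := lt_of_lt_of_le (EReal.coe_lt_coe_iff.2 ha) (hfG x)
    obtain ⟨n, hn⟩ := ((w3 x).eventually_const_lt this).exists
    exact ⟨n, EReal.coe_lt_coe_iff.1 hn⟩
  · have hI : Monotone (fun n => (S.I (w n) : EReal)) := fun n m hnm =>
      EReal.coe_le_coe_iff.2 (I_mono S (w1 n) (w1 m) (fun x => wm x hnm))
    have h1 : (⨆ n, (S.I (w n) : EReal)) ≤ Iup S G :=
      le_sSup ⟨w, w1, w2, w3, tendsto_atTop_iSup hI⟩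
    have h2 := (le_iSup (fun n => (S.I (w n) : EReal)) n).trans h1
    exact EReal.coe_le_coe_iff.1 (h2.trans hlt.le)

lemma lower_eq (S : IntegralSystem X) (f : X → ℝ) :
    lowerInt S (fun x => (f x : EReal)) = - upperInt S (fun x => ((-f) x : EReal)) := by
  apply le_antisymm
  · refine sSup_le ?_
    rintro _ ⟨g, ⟨h1, h2⟩, rfl⟩
    refine EReal.neg_le_neg_iff.2 (sInf_le ⟨fun x => -g x, ⟨h1, fun x => ?_⟩, rfl⟩)
    simpa using h2 x
  · rw [EReal.neg_le]
    refine le_sInf ?_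
    rintro _ ⟨g, ⟨h1, h2⟩, rfl⟩
    rw [EReal.neg_le]
    refine le_sSup ⟨fun x => -g x, ⟨?_, fun x => ?_⟩, ?_⟩
    · simpa [MemLdown] using h1
    · have := h2 x
      rw [EReal.neg_le]
      simpa using this
    · simp [Idown]

/-- Integrability with value `c`. -/
def P (S : IntegralSystem X) (f : X → ℝ) (c : ℝ) : Prop :=
  ∀ ε > 0, U S f (c + ε) ∧ U S (-f) (-c + ε)

lemma upper_eq_of_P {S : IntegralSystem X} {f : X → ℝ} {c : ℝ} (h : P S f c) :
    upperInt S (fun x => (f x : EReal)) = c := by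
  apply le_antisymm
  · refine EReal.le_of_forall_lt_iff_le.1 (fun z hz => ?_)
    have hz' := EReal.coe_lt_coe_iff.1 hz
    have := upper_le (h (z - c) (by linarith)).1
    simpa using this
  · by_contra hcon
    push Not at hcon
    obtain ⟨a, ha1, ha2⟩ := EReal.lt_iff_exists_real_btwn.1 hcon
    have ha2' := EReal.coe_lt_coe_iff.1 ha2
    have := U_neg (U_of_upper_lt ha1) (h ((c - a) / 2) (by linarith)).2
    linarith

lemma P_neg {S : IntegralSystem X} {f : X → ℝ} {c : ℝ} (h : P S f c) : P S (-f) (-c) := by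
  intro ε hε
  rw [neg_neg, neg_neg]
  exact ⟨(h ε hε).2, (h ε hε).1⟩

lemma int_of_P {S : IntegralSystem X} {f : X → ℝ} {c : ℝ} (h : P S f c) :
    Integrable1 S f ∧ Int1 S f = c := by
  refine ⟨⟨c, ?_, upper_eq_of_P h⟩, ?_⟩
  · rw [lower_eq, upper_eq_of_P (P_neg h)]; simp
  · rw [Int1, upper_eq_of_P h, EReal.toReal_coe]

lemma P_of_int {S : IntegralSystem X} {f : X → ℝ} (h : Integrable1 S f) :
    P S f (Int1 S f) := by
  obtain ⟨c, h1, h2⟩ := h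
  have hc : Int1 S f = c := by rw [Int1, h2, EReal.toReal_coe]
  rw [hc]
  rw [lower_eq, neg_eq_iff_eq_neg] at h1
  intro ε hε
  refine ⟨U_of_upper_lt ?_, U_of_upper_lt ?_⟩
  · rw [h2]; exact EReal.coe_lt_coe_iff.2 (by linarith)
  · rw [h1, ← EReal.coe_neg]; exact EReal.coe_lt_coe_iff.2 (by linarith)

lemma P_add {S : IntegralSystem X} {f g : X → ℝ} {c d : ℝ} (h : P S f c) (k : P S g d) :
    P S (f + g) (c + d) := by
  intro ε hε
  obtain ⟨h1, h2⟩ := h (ε / 2) (by linarith)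
  obtain ⟨k1, k2⟩ := k (ε / 2) (by linarith)
  refine ⟨U_mono (U_add h1 k1) (by linarith), ?_⟩
  rw [neg_add]
  exact U_mono (U_add h2 k2) (by linarith)

lemma P_of_mem {S : IntegralSystem X} {f : X → ℝ} (h : f ∈ S.L) : P S f (S.I f) := by
  intro ε hε
  refine ⟨U_mono (U_of_mem h) (by linarith), U_mono (U_of_mem (neg_mem S h)) ?_⟩
  rw [I_neg S h]; linarith

lemma P_zero (S : IntegralSystem X) : P S 0 0 := by
  have := P_of_mem S.zero_mem
  rwa [I_zero] at this

lemma P_smul_pos {S : IntegralSystem X} {f : X → ℝ} {c a : ℝ} (ha : 0 < a) (h : P S f c) :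
    P S (a • f) (a * c) := by
  intro ε hε
  obtain ⟨h1, h2⟩ := h (ε / a) (by positivity)
  have e : a * (ε / a) = ε := by field_simp
  refine ⟨U_mono (U_smul ha h1) (by rw [mul_add, e]), ?_⟩
  rw [← smul_neg]
  exact U_mono (U_smul ha h2) (by rw [mul_add, e]; linarith)

lemma P_smul {S : IntegralSystem X} {f : X → ℝ} {c : ℝ} (a : ℝ) (h : P S f c) :
    P S (a • f) (a * c) := by
  rcases lt_trichotomy a 0 with ha | rfl | ha
  · have := P_smul_pos (neg_pos.2 ha) (P_neg h)
    simpa using this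
  · simpa using P_zero S
  · exact P_smul_pos ha h

lemma P_of_cauchy {S : IntegralSystem X} {f : X → ℝ}
    (h : ∀ ε > 0, ∃ b b', U S f b ∧ U S (-f) b' ∧ b + b' ≤ ε) : ∃ c, P S f c := by
  refine ⟨sInf {b | U S f b}, fun ε hε => ?_⟩
  obtain ⟨b, b', h1, h2, h3⟩ := h ε hε
  have hlow : ∀ z ∈ {b | U S f b}, -b' ≤ z := fun z hz => by
    have := U_neg hz h2
    linarith
  have k1 : sInf {b | U S f b} ≤ b := csInf_le ⟨-b', hlow⟩ h1
  have k2 : -b' ≤ sInf {b | U S f b} := le_csInf ⟨b, h1⟩ hlow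
  exact ⟨U_mono h1 (by linarith), U_mono h2 (by linarith)⟩

lemma pos_part_le {S : IntegralSystem X} {f : X → ℝ} {u v : ℕ → X → ℝ} {b b' : ℝ}
    (u1 : ∀ n, u n ∈ S.L) (u2 : ∀ x, Monotone (fun n => u n x))
    (u3 : ∀ x a, a < f x → ∃ n, a < u n x) (u4 : ∀ n, S.I (u n) ≤ b)
    (v1 : ∀ n, v n ∈ S.L) (v2 : ∀ x, Monotone (fun n => v n x))
    (v3 : ∀ x a, a < (-f) x → ∃ n, a < v n x) (v4 : ∀ n, S.I (v n) ≤ b') (n : ℕ) :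
    S.I ((u n + v n) ⊔ 0) ≤ b + b' := by
  refine key S (S.sup_mem (S.add_mem (u1 n) (v1 n)) S.zero_mem) (u := fun n => u n + v n)
    (fun n => S.add_mem (u1 n) (v1 n)) (fun x => (u2 x).add (v2 x)) (fun x a ha => ?_)
    (fun n => ?_)
  · rcases lt_sup_iff.1 ha with ha | ha
    · exact ⟨n, ha⟩
    · exact dom_add (u2 x) (v2 x) (u3 x) (v3 x) a (by simpa using ha)
  · rw [S.I_add (u1 n) (v1 n)]
    exact add_le_add (u4 n) (v4 n)

lemma P_sup {S : IntegralSystem X} {f g : X → ℝ} {c d : ℝ} (h : P S f c) (k : P S g d) :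
    ∃ e, P S (f ⊔ g) e := by
  apply P_of_cauchy
  intro ε hε
  obtain ⟨⟨u, u1, u2, u3, u4⟩, ⟨v, v1, v2, v3, v4⟩⟩ := h (ε / 4) (by linarith)
  obtain ⟨⟨p, p1, p2, p3, p4⟩, ⟨q, q1, q2, q3, q4⟩⟩ := k (ε / 4) (by linarith)
  have A1 : ∀ n, u n ⊔ p n ∈ S.L := fun n => S.sup_mem (u1 n) (p1 n)
  have B1 : ∀ n, v n ⊓ q n ∈ S.L := fun n => S.inf_mem (v1 n) (q1 n)
  have A2 : ∀ x, Monotone (fun n => (u n ⊔ p n) x) := fun x => (u2 x).sup (p2 x)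
  have B2 : ∀ x, Monotone (fun n => (v n ⊓ q n) x) := fun x => (v2 x).inf (q2 x)
  have hn : ∀ n, S.I (u n ⊔ p n) + S.I (v n ⊓ q n) ≤ ε := by
    intro n
    have e1 := pos_part_le u1 u2 u3 u4 v1 v2 v3 v4 n
    have e2 := pos_part_le p1 p2 p3 p4 q1 q2 q3 q4 n
    have m1 := S.sup_mem (S.add_mem (u1 n) (v1 n)) S.zero_mem
    have m2 := S.sup_mem (S.add_mem (p1 n) (q1 n)) S.zero_mem
    rw [← S.I_add (A1 n) (B1 n)]
    refine (I_mono S (S.add_mem (A1 n) (B1 n)) (S.add_mem m1 m2) (fun x => ?_)).trans ?_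
    · simp only [Pi.add_apply, Pi.sup_apply, Pi.inf_apply, Pi.zero_apply]
      have a1 := le_max_left (u n x + v n x) 0
      have a2 := le_max_right (u n x + v n x) 0
      have a3 := le_max_left (p n x + q n x) 0
      have a4 := le_max_right (p n x + q n x) 0
      have a5 := min_le_left (v n x) (q n x)
      have a6 := min_le_right (v n x) (q n x)
      rcases le_total (u n x) (p n x) with hh | hh
      · rw [sup_eq_right.2 hh]; linarith
      · rw [sup_eq_left.2 hh]; linarith
    · rw [S.I_add m1 m2]; linarith
  have hnm : ∀ n m, S.I (u n ⊔ p n) ≤ ε - S.I (v m ⊓ q m) := by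
    intro n m
    have := hn (max n m)
    have := I_mono S (A1 n) (A1 (max n m)) (fun x => A2 x (le_max_left n m))
    have := I_mono S (B1 m) (B1 (max n m)) (fun x => B2 x (le_max_right n m))
    linarith
  refine ⟨⨆ n, S.I (u n ⊔ p n), ε - ⨆ n, S.I (u n ⊔ p n), ⟨_, A1, A2, fun x a ha => ?_, fun n => ?_⟩,
    ⟨_, B1, B2, fun x a ha => ?_, fun m => ?_⟩, by linarith⟩
  · rcases lt_sup_iff.1 ha with ha | ha
    · obtain ⟨n, hn⟩ := u3 x a ha
      exact ⟨n, lt_sup_iff.2 (Or.inl hn)⟩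
    · obtain ⟨n, hn⟩ := p3 x a ha
      exact ⟨n, lt_sup_iff.2 (Or.inr hn)⟩
  · refine le_ciSup (f := fun n => S.I (u n ⊔ p n)) ⟨ε - S.I (v 0 ⊓ q 0), ?_⟩ n
    rintro _ ⟨n, rfl⟩
    exact hnm n 0
  · have ha' : a < -(f x ⊔ g x) := ha
    have l1 := le_max_left (f x) (g x)
    have l2 := le_max_right (f x) (g x)
    obtain ⟨n, hn⟩ := v3 x a (by simp only [Pi.neg_apply]; linarith)
    obtain ⟨m, hm⟩ := q3 x a (by simp only [Pi.neg_apply]; linarith)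
    exact ⟨max n m, lt_inf_iff.2 ⟨hn.trans_le (v2 x (le_max_left n m)),
      hm.trans_le (q2 x (le_max_right n m))⟩⟩
  · have := ciSup_le (fun n => hnm n m)
    linarith

end DaniellAux

/-- The set `L¹` of `I`-integrable functions is a vector subspace of `ℝ^X` closed under
pointwise max and min, it contains `L`, and the Daniell extension `I¹` is a positive
linear functional on it extending `I`. -/
theorem daniell_extension_basic (S : IntegralSystem X) :
    Integrable1 S (0 : X → ℝ) ∧
    (∀ f g : X → ℝ, Integrable1 S f → Integrable1 S g →
      Integrable1 S (f + g) ∧ Int1 S (f + g) = Int1 S f + Int1 S g) ∧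
    (∀ (c : ℝ) (f : X → ℝ), Integrable1 S f →
      Integrable1 S (c • f) ∧ Int1 S (c • f) = c * Int1 S f) ∧
    (∀ f g : X → ℝ, Integrable1 S f → Integrable1 S g →
      Integrable1 S (f ⊔ g) ∧ Integrable1 S (f ⊓ g)) ∧
    (∀ f ∈ S.L, Integrable1 S f ∧ Int1 S f = S.I f) ∧
    (∀ f : X → ℝ, Integrable1 S f → (∀ x, 0 ≤ f x) → 0 ≤ Int1 S f) := by

  open DaniellAux in
  refine ⟨(int_of_P (P_zero S)).1, fun f g hf hg => int_of_P (P_add (P_of_int hf) (P_of_int hg)),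
    fun c f hf => int_of_P (P_smul c (P_of_int hf)), fun f g hf hg => ⟨?_, ?_⟩,
    fun f hf => int_of_P (P_of_mem hf), fun f hf h0 => ?_⟩
  · obtain ⟨e, he⟩ := P_sup (P_of_int hf) (P_of_int hg)
    exact (int_of_P he).1
  · obtain ⟨e, he⟩ := P_sup (P_neg (P_of_int hf)) (P_neg (P_of_int hg))
    have := (int_of_P (P_neg he)).1
    rwa [neg_sup, neg_neg, neg_neg] at this
  · refine le_of_forall_pos_le_add (fun ε hε => ?_)
    exact U_nonneg ((P_of_int hf) ε hε).1 h0
end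

section
/- (Monotone convergence theorem for the Daniell extension.) Let (L, I) be an integral system on a set X, let (f_n) be a sequence in L¹ increasing pointwise to a real-valued function f : X → ℝ. Then f ∈ L¹ if and only if lim_n I¹(f_n) < ∞, and in that case I¹(f) = lim_n I¹(f_n). -/
open Filter Topology

variable {X : Type*}

namespace IntegralSystem

lemma sub_mem' (S : IntegralSystem X) {f g : X → ℝ} (hf : f ∈ S.L) (hg : g ∈ S.L) :
    f - g ∈ S.L := by
  have : f - g = f + (-1 : ℝ) • g := by ext x; simp [sub_eq_add_neg]
  rw [this]; exact S.add_mem hf (S.smul_mem _ hg)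

lemma I_sub' (S : IntegralSystem X) {f g : X → ℝ} (hf : f ∈ S.L) (hg : g ∈ S.L) :
    S.I (f - g) = S.I f - S.I g := by
  have : f - g = f + (-1 : ℝ) • g := by ext x; simp [sub_eq_add_neg]
  rw [this, S.I_add hf (S.smul_mem _ hg), S.I_smul _ hg]; ring

lemma I_zero' (S : IntegralSystem X) : S.I 0 = 0 := by
  have := S.I_smul 0 S.zero_mem
  simpa using this

lemma I_mono' (S : IntegralSystem X) {f g : X → ℝ} (hf : f ∈ S.L) (hg : g ∈ S.L)
    (h : ∀ x, f x ≤ g x) : S.I f ≤ S.I g := by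
  have := S.I_pos (S.sub_mem' hg hf) (fun x => by simpa using h x)
  rw [S.I_sub' hg hf] at this; linarith

lemma mono_le (g : ℕ → X → ℝ) (hg : ∀ n x, g n x ≤ g (n + 1) x) (x : X) :
    Monotone (fun n => g n x) := monotone_nat_of_le_succ (fun n => hg n x)

/-- Key lemma. -/
lemma key (S : IntegralSystem X) {h : X → ℝ} (hh : h ∈ S.L) (g : ℕ → X → ℝ)
    (gL : ∀ n, g n ∈ S.L) (gm : ∀ n x, g n x ≤ g (n + 1) x)
    (hd : ∀ x, ∀ r < h x, ∃ n, r < g n x) (a : ℝ) (ha : ∀ n, S.I (g n) ≤ a) :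
    S.I h ≤ a := by
  have hL : ∀ n, h ⊓ g n ∈ S.L := fun n => S.inf_mem hh (gL n)
  have ht := S.I_cont (fun n => h - h ⊓ g n) (fun n => S.sub_mem' hh (hL n))
    (fun n x => by simp) (fun n x => by
      have := gm n x
      simp only [Pi.sub_apply, Pi.inf_apply]
      exact sub_le_sub_left (inf_le_inf_left _ this) _)
    (fun x => by
      rw [Metric.tendsto_atTop]
      intro ε hε
      obtain ⟨n, hn⟩ := hd x (h x - ε) (by linarith)
      refine ⟨n, fun m hm => ?_⟩
      have h1 : g n x ≤ g m x := mono_le g gm x hm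
      simp only [Pi.sub_apply, Pi.inf_apply, Real.dist_eq, sub_zero]
      have h2 : h x - ε < h x ⊓ g m x := lt_inf_iff.2 ⟨by linarith, by linarith⟩
      have h3 : h x ⊓ g m x ≤ h x := inf_le_left
      rw [abs_lt]; constructor <;> linarith)
  have h4 : ∀ n, S.I h - a ≤ S.I (h - h ⊓ g n) := fun n => by
    rw [S.I_sub' hh (hL n)]
    have := S.I_mono' (hL n) (gL n) (fun x => inf_le_right)
    linarith [ha n]
  have := ge_of_tendsto' ht h4
  linarith

/-- `f` is dominated by the limit of an increasing sequence in `L` with integrals at most `a`. -/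
def UpBound (S : IntegralSystem X) (f : X → ℝ) (a : ℝ) : Prop :=
  ∃ g : ℕ → X → ℝ, (∀ n, g n ∈ S.L) ∧ (∀ n x, g n x ≤ g (n + 1) x) ∧
    (∀ x, ∀ r < f x, ∃ n, r < g n x) ∧ ∀ n, S.I (g n) ≤ a

lemma UpBound.mono {S : IntegralSystem X} {f f' : X → ℝ} {a a' : ℝ} (h : S.UpBound f a)
    (hf : ∀ x, f' x ≤ f x) (ha : a ≤ a') : S.UpBound f' a' := by
  obtain ⟨g, h1, h2, h3, h4⟩ := h
  exact ⟨g, h1, h2, fun x r hr => h3 x r (hr.trans_le (hf x)), fun n => (h4 n).trans ha⟩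

lemma UpBound.add {S : IntegralSystem X} {f f' : X → ℝ} {a a' : ℝ} (h : S.UpBound f a)
    (h' : S.UpBound f' a') : S.UpBound (f + f') (a + a') := by
  obtain ⟨g, h1, h2, h3, h4⟩ := h
  obtain ⟨g', h1', h2', h3', h4'⟩ := h'
  refine ⟨fun n => g n + g' n, fun n => S.add_mem (h1 n) (h1' n),
    fun n x => add_le_add (h2 n x) (h2' n x), fun x r hr => ?_, fun n => ?_⟩
  · simp only [Pi.add_apply] at hr
    obtain ⟨n, hn⟩ := h3 x (f x - (f x + f' x - r) / 2) (by linarith)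
    obtain ⟨m, hm⟩ := h3' x (f' x - (f x + f' x - r) / 2) (by linarith)
    refine ⟨max n m, ?_⟩
    have k1 : g n x ≤ g (max n m) x := mono_le g h2 x (le_max_left _ _)
    have k2 : g' m x ≤ g' (max n m) x := mono_le g' h2' x (le_max_right _ _)
    simp only [Pi.add_apply]; linarith
  · rw [S.I_add (h1 n) (h1' n)]; exact add_le_add (h4 n) (h4' n)

lemma UpBound.nonneg {S : IntegralSystem X} {a : ℝ} (h : S.UpBound 0 a) : 0 ≤ a := by
  obtain ⟨g, h1, h2, h3, h4⟩ := h
  simpa [S.I_zero'] using S.key S.zero_mem g h1 h2 h3 a h4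

lemma UpBound.pos_seq {S : IntegralSystem X} {f : X → ℝ} {a : ℝ} (h : S.UpBound f a)
    (hf : ∀ x, 0 ≤ f x) : ∃ g : ℕ → X → ℝ, (∀ n, g n ∈ S.L) ∧ (∀ n x, g n x ≤ g (n + 1) x) ∧
    (∀ x, ∀ r < f x, ∃ n, r < g n x) ∧ (∀ n, S.I (g n) ≤ a) ∧ ∀ n x, 0 ≤ g n x := by
  obtain ⟨g, h1, h2, h3, h4⟩ := h
  refine ⟨fun n => g n ⊔ 0, fun n => S.sup_mem (h1 n) S.zero_mem,
    fun n x => sup_le_sup_right (h2 n x) _, fun x r hr => ?_, fun n => ?_, fun n x => le_sup_right⟩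
  · obtain ⟨n, hn⟩ := h3 x r hr
    exact ⟨n, hn.trans_le le_sup_left⟩
  · refine S.key (S.sup_mem (h1 n) S.zero_mem) g h1 h2 (fun x r hr => ?_) a h4
    rcases lt_sup_iff.1 (show r < g n x ⊔ 0 from hr) with h | h
    · exact ⟨n, h⟩
    · exact h3 x r (h.trans_le (hf x))

lemma I_sum (S : IntegralSystem X) (g : ℕ → X → ℝ) (hg : ∀ n, g n ∈ S.L) (N : ℕ) :
    (∑ n ∈ Finset.range N, g n) ∈ S.L ∧
    S.I (∑ n ∈ Finset.range N, g n) = ∑ n ∈ Finset.range N, S.I (g n) := by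
  induction N with
  | zero => simpa using ⟨S.zero_mem, S.I_zero'⟩
  | succ k ih =>
    rw [Finset.sum_range_succ, Finset.sum_range_succ, S.I_add ih.1 (hg k), ih.2]
    exact ⟨S.add_mem ih.1 (hg k), rfl⟩

lemma UpBound.tsum {S : IntegralSystem X} {u : ℕ → X → ℝ} {a : ℕ → ℝ} {b : ℝ} {F : X → ℝ}
    (h : ∀ n, S.UpBound (u n) (a n)) (hu : ∀ n x, 0 ≤ u n x)
    (hb : ∀ N, ∑ n ∈ Finset.range N, a n ≤ b)
    (hF : ∀ x, ∀ r < F x, ∃ M, r < ∑ n ∈ Finset.range M, u n x) : S.UpBound F b := by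
  choose g h1 h2 h3 h4 h5 using fun n => (h n).pos_seq (hu n)
  refine ⟨fun N => ∑ n ∈ Finset.range N, g n N, fun N => (S.I_sum _ (fun n => h1 n N) N).1,
    fun N x => ?_, fun x r hr => ?_, fun N => ?_⟩
  · simp only [Finset.sum_apply]
    rw [Finset.sum_range_succ]
    have := Finset.sum_le_sum (s := Finset.range N) (fun n _ => h2 n N x)
    linarith [h5 N (N+1) x]
  · have hM : ∀ M, ∀ r < ∑ n ∈ Finset.range M, u n x,
        ∃ N, r < ∑ n ∈ Finset.range M, g n N x := by
      intro M
      induction M with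
      | zero => intro r hr; exact ⟨0, by simpa using hr⟩
      | succ k ih =>
        intro r hr
        rw [Finset.sum_range_succ] at hr
        set A := ∑ n ∈ Finset.range k, u n x
        obtain ⟨n, hn⟩ := ih (A - (A + u k x - r) / 2) (by linarith)
        obtain ⟨m, hm⟩ := h3 k x (u k x - (A + u k x - r) / 2) (by linarith)
        refine ⟨max n m, ?_⟩
        rw [Finset.sum_range_succ]
        have k1 : ∑ i ∈ Finset.range k, g i n x ≤ ∑ i ∈ Finset.range k, g i (max n m) x :=
          Finset.sum_le_sum (fun i _ => mono_le (g i) (h2 i) x (le_max_left _ _))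
        have k2 : g k m x ≤ g k (max n m) x := mono_le (g k) (h2 k) x (le_max_right _ _)
        linarith
    obtain ⟨M, hM'⟩ := hF x r hr
    obtain ⟨N, hN⟩ := hM M r hM'
    refine ⟨max M N, hN.trans_le ?_⟩
    simp only [Finset.sum_apply]
    calc ∑ n ∈ Finset.range M, g n N x ≤ ∑ n ∈ Finset.range M, g n (max M N) x :=
          Finset.sum_le_sum (fun i _ => mono_le (g i) (h2 i) x (le_max_right _ _))
      _ ≤ _ := Finset.sum_le_sum_of_subset_of_nonneg
          (Finset.range_mono (le_max_left _ _)) (fun i _ _ => h5 i _ x)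
  · rw [(S.I_sum _ (fun n => h1 n N) N).2]
    exact (Finset.sum_le_sum (fun i _ => h4 i N)).trans (hb N)

lemma upBound_of_lt (S : IntegralSystem X) {f : X → ℝ} {a : ℝ}
    (h : upperInt S (fun x => (f x : EReal)) < a) : S.UpBound f a := by
  obtain ⟨_, ⟨G, ⟨⟨g, h1, h2, h3⟩, hfG⟩, rfl⟩, hlt⟩ := sInf_lt_iff.1 h
  refine ⟨g, h1, h2, fun x r hr => ?_, fun n => ?_⟩
  · have : (r : EReal) < G x := (EReal.coe_lt_coe_iff.2 hr).trans_le (hfG x)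
    obtain ⟨n, hn⟩ := ((h3 x).eventually (lt_mem_nhds this)).exists
    exact ⟨n, EReal.coe_lt_coe_iff.1 hn⟩
  · have hm : Monotone (fun n => (S.I (g n) : EReal)) :=
      monotone_nat_of_le_succ fun n => EReal.coe_le_coe_iff.2 (S.I_mono' (h1 n) (h1 (n+1)) (h2 n))
    have hle : (⨆ n, (S.I (g n) : EReal)) ≤ Iup S G :=
      le_sSup ⟨g, h1, h2, h3, tendsto_atTop_iSup hm⟩
    exact EReal.coe_le_coe_iff.1 (((le_iSup (fun n => (S.I (g n) : EReal)) n).trans hle).trans hlt.le)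

lemma upperInt_le (S : IntegralSystem X) {f : X → ℝ} {a : ℝ} (h : S.UpBound f a) :
    upperInt S (fun x => (f x : EReal)) ≤ a := by
  obtain ⟨g, h1, h2, h3, h4⟩ := h
  have hm : ∀ x, Monotone (fun n => (g n x : EReal)) := fun x =>
    monotone_nat_of_le_succ fun n => EReal.coe_le_coe_iff.2 (h2 n x)
  have hle : (∀ x, (f x : EReal) ≤ ⨆ n, (g n x : EReal)) →
      upperInt S (fun x => (f x : EReal)) ≤ Iup S (fun x => ⨆ n, (g n x : EReal)) :=
    fun hx => sInf_le (Set.mem_image_of_mem _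
      ⟨⟨g, h1, h2, fun x => tendsto_atTop_iSup (hm x)⟩, hx⟩)
  refine (hle fun x => ?_).trans ?_
  · refine EReal.le_of_forall_lt_iff_le.1 fun r hr => ?_
    by_contra hc
    push Not at hc
    obtain ⟨n, hn⟩ := h3 x r (EReal.coe_lt_coe_iff.1 hc)
    exact absurd (hr.trans_le' (le_iSup (fun n => (g n x : EReal)) n)) 
      (not_lt.2 (EReal.coe_le_coe_iff.2 hn.le))
  · refine sSup_le ?_
    rintro c ⟨g', k1, k2, k3, k4⟩
    refine le_of_tendsto' k4 fun n => EReal.coe_le_coe_iff.2 ?_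
    refine S.key (k1 n) g h1 h2 (fun x r hr => ?_) a h4
    have hm' : Monotone (fun n => (g' n x : EReal)) :=
      monotone_nat_of_le_succ fun n => EReal.coe_le_coe_iff.2 (k2 n x)
    have : (r : EReal) < ⨆ n, (g n x : EReal) :=
      (EReal.coe_lt_coe_iff.2 hr).trans_le (hm'.ge_of_tendsto (k3 x) n)
    obtain ⟨m, hm⟩ := lt_iSup_iff.1 this
    exact ⟨m, EReal.coe_lt_coe_iff.1 hm⟩

lemma lowerInt_eq (S : IntegralSystem X) (f : X → ℝ) :
    lowerInt S (fun x => (f x : EReal)) = -upperInt S (fun x => ((-f) x : EReal)) := by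
  apply le_antisymm
  · refine sSup_le ?_
    rintro _ ⟨g, ⟨hg, hgf⟩, rfl⟩
    refine EReal.neg_le_neg_iff.2 (sInf_le ⟨_, ⟨hg, fun x => ?_⟩, rfl⟩)
    simpa using EReal.neg_le_neg_iff.2 (hgf x)
  · rw [EReal.neg_le]
    refine le_sInf ?_
    rintro _ ⟨g, ⟨hg, hgf⟩, rfl⟩
    rw [EReal.neg_le]
    refine le_sSup ⟨fun x => -g x, ⟨?_, fun x => ?_⟩, ?_⟩
    · simpa [MemLdown] using hg
    · have := hgf x
      rw [EReal.neg_le]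
      simpa using this
    · simp [Idown]

/-- `f` is integrable with integral `c`. -/
def HasInt (S : IntegralSystem X) (f : X → ℝ) (c : ℝ) : Prop :=
  ∀ ε > 0, S.UpBound f (c + ε) ∧ S.UpBound (-f) (-c + ε)

lemma hasInt_of_integrable (S : IntegralSystem X) {f : X → ℝ} (h : Integrable1 S f) :
    S.HasInt f (Int1 S f) := by
  obtain ⟨c, h1, h2⟩ := h
  have hc : Int1 S f = c := by simp [Int1, h2]
  rw [hc]
  intro ε hε
  rw [lowerInt_eq, neg_eq_iff_eq_neg] at h1
  refine ⟨S.upBound_of_lt ?_, S.upBound_of_lt ?_⟩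
  · rw [h2]; exact EReal.coe_lt_coe_iff.2 (by linarith)
  · rw [h1, ← EReal.coe_neg]; exact EReal.coe_lt_coe_iff.2 (by linarith)

lemma upperInt_eq (S : IntegralSystem X) {f : X → ℝ} {c : ℝ} (h : S.HasInt f c) :
    upperInt S (fun x => (f x : EReal)) = c := by
  apply le_antisymm
  · refine EReal.le_of_forall_lt_iff_le.1 fun r hr => ?_
    have hr := EReal.coe_lt_coe_iff.1 hr
    have := S.upperInt_le (h (r - c) (by linarith)).1
    simpa using this
  · refine EReal.le_of_forall_lt_iff_le.1 fun r hr => EReal.coe_le_coe_iff.2 ?_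
    have h1 := S.upBound_of_lt hr
    refine le_of_forall_pos_le_add fun ε hε => ?_
    have h2 := h1.add (h ε hε).2
    rw [add_neg_cancel] at h2
    linarith [h2.nonneg]

lemma integrable_of_hasInt (S : IntegralSystem X) {f : X → ℝ} {c : ℝ} (h : S.HasInt f c) :
    Integrable1 S f ∧ Int1 S f = c := by
  have h1 := S.upperInt_eq h
  have h2 : S.HasInt (-f) (-c) := fun ε hε => ⟨(h ε hε).2, by simpa using (h ε hε).1⟩
  refine ⟨⟨c, ?_, h1⟩, by simp [Int1, h1]⟩
  rw [lowerInt_eq, S.upperInt_eq h2]; simp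

lemma HasInt.le {S : IntegralSystem X} {f g : X → ℝ} {c d : ℝ} (hf : S.HasInt f c)
    (hg : S.HasInt g d) (h : ∀ x, f x ≤ g x) : c ≤ d := by
  refine le_of_forall_pos_le_add fun ε hε => ?_
  have h2 := ((hg (ε/2) (by linarith)).1.mono h le_rfl).add (hf (ε/2) (by linarith)).2
  rw [add_neg_cancel] at h2
  linarith [h2.nonneg]

lemma hasInt_lim (S : IntegralSystem X) (f : ℕ → X → ℝ) (F : X → ℝ) (c : ℕ → ℝ) (C : ℝ)
    (hf : ∀ n, S.HasInt (f n) (c n))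
    (hmono : ∀ n x, f n x ≤ f (n + 1) x)
    (hlim : ∀ x, Tendsto (fun n => f n x) atTop (𝓝 (F x)))
    (hc : Tendsto c atTop (𝓝 C)) : S.HasInt F C := by
  have cm : Monotone c := monotone_nat_of_le_succ fun n => (hf n).le (hf (n+1)) (hmono n)
  intro ε hε
  constructor
  · have hu : ∀ n, S.UpBound (f (n+1) - f n) (c (n+1) - c n + ε / 2 * (1/2)^(n+1)) := by
      intro n
      have hp : 0 < ε / 2 * (1/2)^(n+1) / 2 := by positivity
      have := (hf (n+1) _ hp).1.add (hf n _ hp).2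
      rw [← sub_eq_add_neg] at this
      exact this.mono (fun _ => le_rfl) (by linarith)
    have hG : ∀ N, ∑ n ∈ Finset.range N, ((1:ℝ)/2)^(n+1) = 1 - (1/2)^N := by
      intro N
      induction N with
      | zero => simp
      | succ k ih => rw [Finset.sum_range_succ, ih]; ring
    have h1 : S.UpBound (F - f 0) (C - c 0 + ε / 2) := by
      refine UpBound.tsum hu (fun n x => by simpa using hmono n x) (fun N => ?_) (fun x r hr => ?_)
      · rw [Finset.sum_add_distrib, Finset.sum_range_sub, ← Finset.mul_sum, hG]
        have := cm.ge_of_tendsto hc N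
        have hp : 0 < ε / 2 * (1/2)^N := by positivity
        linarith
      · simp only [Pi.sub_apply] at hr ⊢
        obtain ⟨M, hM⟩ := ((hlim x).eventually
          (lt_mem_nhds (show r + f 0 x < F x by linarith))).exists
        refine ⟨M, ?_⟩
        rw [Finset.sum_range_sub (fun n => f n x)]
        linarith
    have := h1.add (hf 0 (ε/2) (by linarith)).1
    rw [sub_add_cancel] at this
    exact this.mono (fun _ => le_rfl) (by linarith)
  · obtain ⟨n, hn⟩ := (hc.eventually (lt_mem_nhds (show C - ε/2 < C by linarith))).exists
    refine (hf n (ε/2) (by linarith)).2.mono (fun x => ?_) (by linarith)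
    exact neg_le_neg ((mono_le f hmono x).ge_of_tendsto (hlim x) n)

end IntegralSystem

/-- Monotone convergence theorem for the Daniell extension: if `(f n)` is a sequence in
`L¹` increasing pointwise to the real-valued function `F`, then `F ∈ L¹` iff
`lim I¹ (f n) < ∞` (the limit of the increasing sequence `I¹ (f n)` being its supremum in
`(−∞,∞]`), and in that case `I¹ F = lim I¹ (f n)`. -/
theorem daniell_monotone_convergence (S : IntegralSystem X) (f : ℕ → X → ℝ) (F : X → ℝ)
    (hf : ∀ n, Integrable1 S (f n))
    (hmono : ∀ n x, f n x ≤ f (n + 1) x)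
    (hlim : ∀ x, Tendsto (fun n => f n x) atTop (𝓝 (F x))) :
    (Integrable1 S F ↔ (⨆ n, ((Int1 S (f n) : EReal))) < ⊤) ∧
    (Integrable1 S F → Tendsto (fun n => Int1 S (f n)) atTop (𝓝 (Int1 S F))) := by
  have hI := fun n => S.hasInt_of_integrable (hf n)
  have cm : Monotone (fun n => Int1 S (f n)) :=
    monotone_nat_of_le_succ fun n => (hI n).le (hI (n+1)) (hmono n)
  have main : ∀ B : ℝ, (∀ n, Int1 S (f n) ≤ B) →
      Integrable1 S F ∧ Tendsto (fun n => Int1 S (f n)) atTop (𝓝 (Int1 S F)) := by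
    intro B hB
    have ht := tendsto_atTop_ciSup cm ⟨B, by rintro _ ⟨n, rfl⟩; exact hB n⟩
    obtain ⟨h1, h2⟩ := S.integrable_of_hasInt (S.hasInt_lim f F _ _ hI hmono hlim ht)
    exact ⟨h1, by rw [h2]; exact ht⟩
  have bd : Integrable1 S F → ∀ n, Int1 S (f n) ≤ Int1 S F := fun h n =>
    (hI n).le (S.hasInt_of_integrable h) fun x =>
      (IntegralSystem.mono_le f hmono x).ge_of_tendsto (hlim x) n
  refine ⟨⟨fun h => ?_, fun h => ?_⟩, fun h => (main _ (bd h)).2⟩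
  · exact (iSup_le fun n => EReal.coe_le_coe_iff.2 (bd h n)).trans_lt (EReal.coe_lt_top _)
  · obtain ⟨B, hB, -⟩ := EReal.lt_iff_exists_real_btwn.1 h
    exact (main B fun n => EReal.coe_le_coe_iff.1
      ((le_iSup (fun n => (Int1 S (f n) : EReal)) n).trans hB.le)).1
end

section
/- (Dominated convergence theorem for the Daniell extension.) Let (L, I) be an integral system on a set X, let (f_n) be a sequence in L¹ and g ∈ L¹ with |f_n| ≤ g pointwise for all n. Then the pointwise functions inf_{n≥1} f_n, sup_{n≥1} f_n, liminf_n f_n and limsup_n f_n all belong to L¹, and I¹(liminf_n f_n) ≤ liminf_n I¹(f_n) ≤ limsup_n I¹(f_n) ≤ I¹(limsup_n f_n). In particular, if f(x) = lim_n f_n(x) exists for every x ∈ X, then f ∈ L¹ and I¹(f) = lim_n I¹(f_n). -/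
open Filter Topology

variable {X : Type*}

namespace Daniell

lemma neg_memL (S : IntegralSystem X) {f : X → ℝ} (hf : f ∈ S.L) : -f ∈ S.L := by
  simpa using S.smul_mem (-1) hf

lemma sub_memL (S : IntegralSystem X) {f g : X → ℝ} (hf : f ∈ S.L) (hg : g ∈ S.L) :
    f - g ∈ S.L := by
  rw [sub_eq_add_neg]; exact S.add_mem hf (neg_memL S hg)

lemma I_neg (S : IntegralSystem X) {f : X → ℝ} (hf : f ∈ S.L) : S.I (-f) = - S.I f := by
  simpa using S.I_smul (-1) hf

lemma I_sub (S : IntegralSystem X) {f g : X → ℝ} (hf : f ∈ S.L) (hg : g ∈ S.L) :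
    S.I (f - g) = S.I f - S.I g := by
  rw [sub_eq_add_neg, S.I_add hf (neg_memL S hg), I_neg S hg]; ring

lemma I_zero (S : IntegralSystem X) : S.I 0 = 0 := by
  simpa using S.I_smul 0 S.zero_mem

lemma I_mono (S : IntegralSystem X) {f g : X → ℝ} (hf : f ∈ S.L) (hg : g ∈ S.L)
    (h : ∀ x, f x ≤ g x) : S.I f ≤ S.I g := by
  have := S.I_pos (sub_memL S hg hf) (fun x => by simpa using h x)
  rw [I_sub S hg hf] at this
  linarith

lemma sum_memL (S : IntegralSystem X) {f : ℕ → X → ℝ} (hf : ∀ n, f n ∈ S.L) (m : ℕ) :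
    (∑ i ∈ Finset.range m, f i) ∈ S.L ∧
      S.I (∑ i ∈ Finset.range m, f i) = ∑ i ∈ Finset.range m, S.I (f i) := by
  induction m with
  | zero => simpa using ⟨S.zero_mem, I_zero S⟩
  | succ m ih =>
    rw [Finset.sum_range_succ, Finset.sum_range_succ, S.I_add ih.1 (hf m), ih.2]
    exact ⟨S.add_mem ih.1 (hf m), rfl⟩

/-- `v ≤ sup u` and `I (u n) ≤ C` for all `n` imply `I v ≤ C`. -/
lemma I_le_of_seq (S : IntegralSystem X) {v : X → ℝ} (hv : v ∈ S.L) {u : ℕ → X → ℝ}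
    (hu : ∀ n, u n ∈ S.L) (hm : Monotone u)
    (hx : ∀ x, ∀ ε > 0, ∃ n, v x < u n x + ε) {C : ℝ} (hC : ∀ n, S.I (u n) ≤ C) :
    S.I v ≤ C := by
  have hw : ∀ n, (v - u n) ⊔ 0 ∈ S.L := fun n =>
    S.sup_mem (sub_memL S hv (hu n)) S.zero_mem
  have ht := S.I_cont (fun n => (v - u n) ⊔ 0) hw (fun n x => by simp)
    (fun n x => by
      have := hm (Nat.le_succ n) x
      simp only [Pi.sup_apply, Pi.sub_apply, Pi.zero_apply]
      exact max_le_max (sub_le_sub_left this _) le_rfl)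
    (fun x => by
      rw [Metric.tendsto_atTop]
      intro ε hε
      obtain ⟨N, hN⟩ := hx x ε hε
      refine ⟨N, fun n hn => ?_⟩
      have := hm hn x
      simp only [Pi.sup_apply, Pi.sub_apply, Pi.zero_apply, Real.dist_eq, sub_zero]
      rw [abs_of_nonneg (le_max_right _ _)]
      exact max_lt (by linarith) hε)
  have ht2 := ht.const_add C
  rw [add_zero] at ht2
  refine ge_of_tendsto' ht2 (fun n => ?_)
  have h1 : S.I v ≤ S.I (u n + ((v - u n) ⊔ 0)) := by
    refine I_mono S hv (S.add_mem (hu n) (hw n)) (fun x => ?_)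
    simp only [Pi.add_apply, Pi.sup_apply, Pi.sub_apply, Pi.zero_apply]
    linarith [le_max_left (v x - u n x) 0]
  rw [S.I_add (hu n) (hw n)] at h1
  linarith [hC n]

/-- `f` is bounded by an element of `L_↑` with integral at most `C`. -/
def UB (S : IntegralSystem X) (f : X → ℝ) (C : ℝ) : Prop :=
  ∃ u : ℕ → X → ℝ, (∀ n, u n ∈ S.L) ∧ Monotone u ∧
    (∀ x, ∀ ε > 0, ∃ n, f x < u n x + ε) ∧ ∀ n, S.I (u n) ≤ C

lemma UB.mono {S : IntegralSystem X} {f g : X → ℝ} {a b : ℝ} (h : UB S g a)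
    (hfg : ∀ x, f x ≤ g x) (hab : a ≤ b) : UB S f b := by
  obtain ⟨u, h1, h2, h3, h4⟩ := h
  refine ⟨u, h1, h2, fun x ε hε => ?_, fun n => (h4 n).trans hab⟩
  obtain ⟨n, hn⟩ := h3 x ε hε
  exact ⟨n, (hfg x).trans_lt hn⟩

lemma UB.add {S : IntegralSystem X} {f g : X → ℝ} {a b : ℝ} (hf : UB S f a)
    (hg : UB S g b) : UB S (fun x => f x + g x) (a + b) := by
  obtain ⟨u, h1, h2, h3, h4⟩ := hf
  obtain ⟨v, k1, k2, k3, k4⟩ := hg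
  refine ⟨fun n => u n + v n, fun n => S.add_mem (h1 n) (k1 n), fun m n hmn =>
    add_le_add (h2 hmn) (k2 hmn), fun x ε hε => ?_, fun n => ?_⟩
  · obtain ⟨n, hn⟩ := h3 x (ε/2) (by linarith)
    obtain ⟨m, hm⟩ := k3 x (ε/2) (by linarith)
    have p := h2 (le_max_left n m) x
    have q := k2 (le_max_right n m) x
    exact ⟨max n m, by simp only [Pi.add_apply]; linarith⟩
  · rw [S.I_add (h1 n) (k1 n)]; linarith [h4 n, k4 n]

lemma UB.of_mem {S : IntegralSystem X} {f : X → ℝ} (hf : f ∈ S.L) : UB S f (S.I f) :=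
  ⟨fun _ => f, fun _ => hf, monotone_const, fun x ε hε => ⟨0, by linarith⟩, fun _ => le_rfl⟩

lemma UB.le {S : IntegralSystem X} {f : X → ℝ} (hf : f ∈ S.L) {a : ℝ} (h : UB S f a) :
    S.I f ≤ a := by
  obtain ⟨u, h1, h2, h3, h4⟩ := h
  exact I_le_of_seq S hf h1 h2 h3 h4

lemma UB.nonneg {S : IntegralSystem X} {f : X → ℝ} {a b : ℝ} (h : UB S f a)
    (h' : UB S (fun x => - f x) b) : 0 ≤ a + b := by
  have := ((h.add h').mono (f := 0) (fun x => by simp) le_rfl).le S.zero_mem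
  rwa [I_zero] at this

/-- Countable subadditivity. -/
lemma UB.tsum {S : IntegralSystem X} {d : ℕ → X → ℝ} {a : ℕ → ℝ} {A : ℝ} {F : X → ℝ}
    (hd : ∀ n x, 0 ≤ d n x) (h : ∀ n, UB S (d n) (a n))
    (hA : ∀ n, ∑ i ∈ Finset.range n, a i ≤ A)
    (hF : ∀ x, ∀ ε > 0, ∃ n, F x < ∑ i ∈ Finset.range n, d i x + ε) : UB S F A := by
  choose u h1 h2 h3 h4 using h
  have hp : ∀ i m, u i m ⊔ 0 ∈ S.L := fun i m => S.sup_mem (h1 i m) S.zero_mem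
  have hI : ∀ i m, S.I (u i m ⊔ 0) ≤ a i := by
    intro i m
    refine I_le_of_seq S (hp i m) (h1 i) (h2 i) (fun x ε hε => ?_) (h4 i)
    obtain ⟨n, hn⟩ := h3 i x ε hε
    refine ⟨max n m, ?_⟩
    have p := h2 i (le_max_left n m) x
    have q := h2 i (le_max_right n m) x
    have := hd i x
    simp only [Pi.sup_apply, Pi.zero_apply]
    exact max_lt (by linarith) (by linarith)
  refine ⟨fun m => ∑ i ∈ Finset.range m, (u i m ⊔ 0), fun m => (sum_memL S (fun i => hp i m) m).1,
    fun m n hmn => ?_, fun x ε hε => ?_, fun m => ?_⟩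
  · refine (Finset.sum_le_sum (fun i _ => sup_le_sup_right (h2 i hmn) 0)).trans ?_
    exact Finset.sum_le_sum_of_subset_of_nonneg (Finset.range_mono hmn)
      (fun i _ _ => le_sup_right)
  · have key : ∀ n, ∀ ε > 0, ∃ M, ∀ m ≥ M,
        ∑ i ∈ Finset.range n, d i x < ∑ i ∈ Finset.range n, (u i m x ⊔ 0) + ε := by
      intro n
      induction n with
      | zero => intro ε hε; exact ⟨0, fun m _ => by simpa using hε⟩
      | succ n ih =>
        intro ε hε
        obtain ⟨M, hM⟩ := ih (ε/2) (by linarith)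
        obtain ⟨K, hK⟩ := h3 n x (ε/2) (by linarith)
        refine ⟨max M K, fun m hm => ?_⟩
        have p := hM m (le_trans (le_max_left _ _) hm)
        have q := h2 n (le_trans (le_max_right _ _) hm) x
        rw [Finset.sum_range_succ, Finset.sum_range_succ]
        linarith [le_max_left (u n m x) 0]
    obtain ⟨n, hn⟩ := hF x (ε/2) (by linarith)
    obtain ⟨M, hM⟩ := key n (ε/2) (by linarith)
    refine ⟨max n M, ?_⟩
    have p := hM (max n M) (le_max_right _ _)
    have q : ∑ i ∈ Finset.range n, (u i (max n M) x ⊔ 0) ≤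
        ∑ i ∈ Finset.range (max n M), (u i (max n M) x ⊔ 0) :=
      Finset.sum_le_sum_of_subset_of_nonneg (Finset.range_mono (le_max_left _ _))
        (fun i _ _ => le_sup_right)
    simp only [Finset.sum_apply, Pi.sup_apply, Pi.zero_apply]
    linarith
  · rw [(sum_memL S (fun i => hp i m) m).2]
    exact (Finset.sum_le_sum (fun i _ => hI i m)).trans (hA m)

lemma upperInt_le {S : IntegralSystem X} {f : X → ℝ} {a : ℝ} (h : UB S f a) :
    upperInt S (fun x => (f x : EReal)) ≤ a := by
  obtain ⟨u, h1, h2, h3, h4⟩ := h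
  set G : X → EReal := fun x => ⨆ n, (u n x : EReal) with hG
  have hmono : ∀ x, Monotone (fun n => (u n x : EReal)) := fun x m n hmn =>
    EReal.coe_le_coe_iff.2 (h2 hmn x)
  have hmem : MemLup S G := ⟨u, h1, fun n x => h2 (Nat.le_succ n) x, fun x =>
    tendsto_atTop_iSup (hmono x)⟩
  have hle : ∀ x, (f x : EReal) ≤ G x := by
    intro x
    by_contra hcon
    obtain ⟨r, hr1, hr2⟩ := EReal.lt_iff_exists_real_btwn.1 (not_le.1 hcon)
    have hr : r < f x := EReal.coe_lt_coe_iff.1 hr2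
    obtain ⟨n, hn⟩ := h3 x (f x - r) (by linarith)
    have h5 : (r : EReal) < u n x := EReal.coe_lt_coe_iff.2 (by linarith)
    exact absurd (h5.trans_le (le_iSup (fun n => (u n x : EReal)) n)) (not_lt.2 hr1.le)
  have h6 : upperInt S (fun x => (f x : EReal)) ≤ Iup S G := sInf_le ⟨G, ⟨hmem, hle⟩, rfl⟩
  refine h6.trans ?_
  refine sSup_le ?_
  rintro c ⟨v, k1, k2, k3, k4⟩
  refine le_of_tendsto' k4 (fun n => EReal.coe_le_coe_iff.2 ?_)
  refine I_le_of_seq S (k1 n) h1 h2 (fun x ε hε => ?_) h4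
  have hvm : Monotone (fun n => (v n x : EReal)) :=
    monotone_nat_of_le_succ fun n => EReal.coe_le_coe_iff.2 (k2 n x)
  have h5 : ((v n x - ε : ℝ) : EReal) < G x :=
    lt_of_lt_of_le (EReal.coe_lt_coe_iff.2 (by linarith)) (hvm.ge_of_tendsto (k3 x) n)
  obtain ⟨m, hm⟩ := lt_iSup_iff.1 h5
  exact ⟨m, by linarith [EReal.coe_lt_coe_iff.1 hm]⟩

lemma UB_of_lt {S : IntegralSystem X} {f : X → ℝ} {a : ℝ}
    (h : upperInt S (fun x => (f x : EReal)) < a) : UB S f a := by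
  obtain ⟨_, ⟨g, ⟨⟨u, h1, h2, h3⟩, hle⟩, rfl⟩, hlt⟩ := sInf_lt_iff.1 h
  have hm : Monotone u := monotone_nat_of_le_succ h2
  have hIm : Monotone (fun n => (S.I (u n) : EReal)) := fun m n hmn =>
    EReal.coe_le_coe_iff.2 (I_mono S (h1 m) (h1 n) (hm hmn))
  have hc : (⨆ n, (S.I (u n) : EReal)) ≤ Iup S g :=
    le_sSup ⟨u, h1, h2, h3, tendsto_atTop_iSup hIm⟩
  refine ⟨u, h1, hm, fun x ε hε => ?_, fun n => ?_⟩
  · have h5 : ((f x - ε : ℝ) : EReal) < g x :=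
      lt_of_lt_of_le (EReal.coe_lt_coe_iff.2 (by linarith)) (hle x)
    obtain ⟨n, hn⟩ := ((h3 x).eventually_const_lt h5).exists
    exact ⟨n, by linarith [EReal.coe_lt_coe_iff.1 hn]⟩
  · have := (le_iSup (fun n => (S.I (u n) : EReal)) n).trans (hc.trans hlt.le)
    exact EReal.coe_le_coe_iff.1 this

lemma lowerInt_eq (S : IntegralSystem X) (f : X → EReal) :
    lowerInt S f = - upperInt S (fun x => - f x) := by
  apply le_antisymm
  · refine sSup_le ?_
    rintro _ ⟨g, ⟨hg, hle⟩, rfl⟩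
    refine EReal.neg_le_neg_iff.2 (sInf_le ⟨_, ⟨hg, fun x => EReal.neg_le_neg_iff.2 (hle x)⟩, rfl⟩)
  · rw [EReal.neg_le]
    refine le_sInf ?_
    rintro _ ⟨g, ⟨hg, hle⟩, rfl⟩
    rw [EReal.neg_le]
    refine le_sSup ⟨fun x => - g x, ⟨?_, fun x => EReal.neg_le.1 (hle x)⟩, ?_⟩
    · simpa [MemLdown] using hg
    · simp [Idown]

/-- `L¹` as the closure of `L`. -/
def J (S : IntegralSystem X) (f : X → ℝ) (c : ℝ) : Prop :=
  ∀ ε > 0, ∃ h ∈ S.L, UB S (fun x => |f x - h x|) ε ∧ |S.I h - c| ≤ ε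

lemma J.neg {S : IntegralSystem X} {f : X → ℝ} {c : ℝ} (h : J S f c) :
    J S (fun x => - f x) (-c) := by
  intro ε hε
  obtain ⟨k, hk, h1, h2⟩ := h ε hε
  refine ⟨-k, neg_memL S hk, h1.mono (fun x => ?_) le_rfl, ?_⟩
  · rw [← abs_neg]; apply le_of_eq; congr 1; simp only [Pi.neg_apply]; ring
  · rw [I_neg S hk, ← abs_neg]; convert h2 using 2; ring

lemma J.add {S : IntegralSystem X} {f g : X → ℝ} {c d : ℝ} (hf : J S f c) (hg : J S g d) :
    J S (fun x => f x + g x) (c + d) := by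
  intro ε hε
  obtain ⟨h, hh, h1, h2⟩ := hf (ε/2) (by linarith)
  obtain ⟨k, hk, k1, k2⟩ := hg (ε/2) (by linarith)
  refine ⟨h + k, S.add_mem hh hk, (h1.add k1).mono (fun x => ?_) (by linarith), ?_⟩
  · refine le_trans (le_of_eq ?_) (abs_add_le _ _)
    congr 1; simp only [Pi.add_apply]; ring
  · rw [S.I_add hh hk]
    refine le_trans (le_of_eq ?_) ((abs_add_le (S.I h - c) (S.I k - d)).trans (by linarith))
    congr 1; ring

lemma J.ub {S : IntegralSystem X} {f : X → ℝ} {c : ℝ} (h : J S f c) {a : ℝ} (ha : c < a) :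
    UB S f a := by
  obtain ⟨k, hk, h1, h2⟩ := h ((a - c)/2) (by linarith)
  refine (h1.add (UB.of_mem hk)).mono (fun x => ?_) ?_
  · linarith [le_abs_self (f x - k x)]
  · linarith [le_abs_self (S.I k - c)]

lemma J.le_of_ub {S : IntegralSystem X} {f : X → ℝ} {c : ℝ} (h : J S f c) {a : ℝ}
    (ha : UB S f a) : c ≤ a := by
  refine le_of_forall_pos_le_add fun ε hε => ?_
  have := ha.nonneg (h.neg.ub (a := -c + ε) (by linarith))
  linarith

lemma J.mono {S : IntegralSystem X} {f g : X → ℝ} {c d : ℝ} (hf : J S f c) (hg : J S g d)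
    (h : ∀ x, f x ≤ g x) : c ≤ d := by
  refine le_of_forall_pos_le_add fun ε hε => ?_
  exact hf.le_of_ub ((hg.ub (a := d + ε) (by linarith)).mono h le_rfl)

lemma J.upper {S : IntegralSystem X} {f : X → ℝ} {c : ℝ} (h : J S f c) :
    upperInt S (fun x => (f x : EReal)) = c := by
  apply le_antisymm
  · by_contra hcon
    obtain ⟨r, hr1, hr2⟩ := EReal.lt_iff_exists_real_btwn.1 (not_le.1 hcon)
    exact absurd (upperInt_le (h.ub (EReal.coe_lt_coe_iff.1 hr1))) (not_le.2 hr2)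
  · by_contra hcon
    obtain ⟨r, hr1, hr2⟩ := EReal.lt_iff_exists_real_btwn.1 (not_le.1 hcon)
    exact absurd (h.le_of_ub (UB_of_lt hr1)) (not_le.2 (EReal.coe_lt_coe_iff.1 hr2))

lemma J.integrable {S : IntegralSystem X} {f : X → ℝ} {c : ℝ} (h : J S f c) :
    Integrable1 S f := by
  refine ⟨c, ?_, h.upper⟩
  have := h.neg.upper
  rw [lowerInt_eq]
  simp only [EReal.coe_neg] at this
  rw [this, neg_neg]

lemma J.int1 {S : IntegralSystem X} {f : X → ℝ} {c : ℝ} (h : J S f c) : Int1 S f = c := by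
  rw [Int1, h.upper, EReal.toReal_coe]

lemma J_of_integrable {S : IntegralSystem X} {f : X → ℝ} (hf : Integrable1 S f) :
    J S f (Int1 S f) := by
  obtain ⟨c, hl, hu⟩ := hf
  have hc : Int1 S f = c := by rw [Int1, hu, EReal.toReal_coe]
  rw [hc]
  rw [lowerInt_eq] at hl
  have hl' : upperInt S (fun x => ((- f x : ℝ) : EReal)) = ((-c : ℝ) : EReal) := by
    simp only [EReal.coe_neg]; rw [← hl, neg_neg]
  intro ε hε
  obtain ⟨u, h1, h2, h3, h4⟩ := UB_of_lt (S := S) (f := f) (a := c + ε/4)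
    (by rw [hu]; exact EReal.coe_lt_coe_iff.2 (by linarith))
  obtain ⟨v, k1, k2, k3, k4⟩ := UB_of_lt (S := S) (f := fun x => - f x) (a := -c + ε/4)
    (by rw [hl']; exact EReal.coe_lt_coe_iff.2 (by linarith))
  obtain ⟨n, hn⟩ : ∃ n, c - ε/4 < S.I (u n) := by
    by_contra hcon
    push Not at hcon
    have := upperInt_le ⟨u, h1, h2, h3, hcon⟩
    rw [hu, EReal.coe_le_coe_iff] at this
    linarith
  refine ⟨u n, h1 n, ⟨fun m => (u m - u n) + (u m + v m), fun m =>
    S.add_mem (sub_memL S (h1 m) (h1 n)) (S.add_mem (h1 m) (k1 m)), fun i j hij =>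
      add_le_add (sub_le_sub_right (h2 hij) _) (add_le_add (h2 hij) (k2 hij)),
      fun x δ hδ => ?_, fun m => ?_⟩, ?_⟩
  · obtain ⟨p, hp⟩ := h3 x (δ/3) (by linarith)
    obtain ⟨q, hq⟩ := k3 x (δ/3) (by linarith)
    refine ⟨max n (max p q), ?_⟩
    have e1 := h2 (le_max_left n (max p q)) x
    have e2 := h2 ((le_max_left p q).trans (le_max_right n (max p q))) x
    have e3 := k2 ((le_max_right p q).trans (le_max_right n (max p q))) x
    simp only [Pi.add_apply, Pi.sub_apply]
    rw [← sub_lt_iff_lt_add]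
    rw [sub_lt_iff_lt_add, abs_lt]
    constructor <;> linarith
  · rw [S.I_add (sub_memL S (h1 m) (h1 n)) (S.add_mem (h1 m) (k1 m)), I_sub S (h1 m) (h1 n),
      S.I_add (h1 m) (k1 m)]
    linarith [h4 m, k4 m]
  · rw [abs_le]; constructor <;> linarith [h4 n]

lemma J_exists {S : IntegralSystem X} {f : X → ℝ}
    (hf : ∀ ε > 0, ∃ h ∈ S.L, UB S (fun x => |f x - h x|) ε) : ∃ c, J S f c := by
  have key : ∀ ε > 0, ∀ h ∈ S.L, UB S (fun x => |f x - h x|) ε →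
      ((S.I h - ε : ℝ) : EReal) ≤ upperInt S (fun x => (f x : EReal)) ∧
      upperInt S (fun x => (f x : EReal)) ≤ ((S.I h + ε : ℝ) : EReal) := by
    intro ε hε h hh hu
    constructor
    · by_contra hcon
      obtain ⟨r, hr1, hr2⟩ := EReal.lt_iff_exists_real_btwn.1 (not_le.1 hcon)
      have h5 := ((UB_of_lt hr1).add hu).mono (f := h)
        (fun x => by linarith [neg_abs_le (f x - h x)]) le_rfl
      have := h5.le hh
      linarith [EReal.coe_lt_coe_iff.1 hr2]
    · refine upperInt_le (((UB.of_mem hh).add hu).mono (fun x => ?_) le_rfl)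
      linarith [le_abs_self (f x - h x)]
  obtain ⟨c, hc⟩ : ∃ c : ℝ, upperInt S (fun x => (f x : EReal)) = c := by
    obtain ⟨h, hh, hu⟩ := hf 1 one_pos
    obtain ⟨h1, h2⟩ := key 1 one_pos h hh hu
    refine ⟨_, (EReal.coe_toReal ?_ ?_).symm⟩
    · exact (h2.trans_lt (EReal.coe_lt_top _)).ne
    · exact ((EReal.bot_lt_coe _).trans_le h1).ne'
  refine ⟨c, fun ε hε => ?_⟩
  obtain ⟨h, hh, hu⟩ := hf ε hε
  obtain ⟨h1, h2⟩ := key ε hε h hh hu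
  rw [hc, EReal.coe_le_coe_iff] at h1 h2
  exact ⟨h, hh, hu, by rw [abs_le]; constructor <;> linarith⟩

lemma J.sup {S : IntegralSystem X} {f g : X → ℝ} {c d : ℝ} (hf : J S f c) (hg : J S g d) :
    ∃ e, J S (f ⊔ g) e := by
  refine J_exists fun ε hε => ?_
  obtain ⟨h, hh, h1, -⟩ := hf (ε/2) (by linarith)
  obtain ⟨k, hk, k1, -⟩ := hg (ε/2) (by linarith)
  refine ⟨h ⊔ k, S.sup_mem hh hk, (h1.add k1).mono (fun x => ?_) (by linarith)⟩
  refine (abs_max_sub_max_le_max _ _ _ _).trans (max_le ?_ ?_)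
  · linarith [abs_nonneg (g x - k x)]
  · linarith [abs_nonneg (f x - h x)]

/-- Monotone convergence. -/
lemma J.mct {S : IntegralSystem X} {p : ℕ → X → ℝ} {c : ℕ → ℝ} {F : X → ℝ} {C : ℝ}
    (hp : ∀ n, J S (p n) (c n)) (hm : Monotone p)
    (hF : ∀ x, Tendsto (fun n => p n x) atTop (𝓝 (F x)))
    (hc : Tendsto c atTop (𝓝 C)) : J S F C := by
  have hcm : Monotone c := fun m n hmn => (hp m).mono (hp n) (hm hmn)
  have hcC : ∀ n, c n ≤ C := hcm.ge_of_tendsto hc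
  have hpF : ∀ n x, p n x ≤ F x := fun n x =>
    Monotone.ge_of_tendsto (f := fun n => p n x) (fun _ _ h => hm h x) (hF x) n
  have key : ∀ N, ∀ ε > 0, UB S (fun x => F x - p N x) (C - c N + ε) := by
    intro N ε hε
    refine UB.tsum (d := fun i x => p (N + (i + 1)) x - p (N + i) x)
      (a := fun i => (c (N + (i + 1)) - ε * (1/2)^(i+1)) - (c (N + i) - ε * (1/2)^i))
      (fun n x => sub_nonneg.2 (hm (by omega) x)) (fun n => ?_) (fun n => ?_)
      (fun x δ hδ => ?_)
    · have h1 : (0:ℝ) < ε * (1/2)^n := by positivity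
      refine ((hp (N + (n + 1))).add (hp (N + n)).neg).ub ?_
      rw [pow_succ]; linarith
    · rw [Finset.sum_range_sub (fun i => c (N + i) - ε * (1/2)^i)]
      have h1 : (0:ℝ) < ε * (1/2)^n := by positivity
      have := hcC (N + n)
      simp only [add_zero, pow_zero, mul_one]
      linarith
    · have h1 : Tendsto (fun n => p (N + n) x) atTop (𝓝 (F x)) := by
        have := (tendsto_add_atTop_iff_nat N).2 (hF x)
        simpa [add_comm] using this
      obtain ⟨n, hn⟩ := (h1.eventually_const_lt (show F x - δ < F x by linarith)).exists
      refine ⟨n, ?_⟩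
      rw [Finset.sum_range_sub (fun i => p (N + i) x)]
      simp only [add_zero]
      linarith
  intro ε hε
  obtain ⟨N, hN⟩ := (hc.eventually_const_lt (show C - ε/4 < C by linarith)).exists
  obtain ⟨h, hh, h1, h2⟩ := hp N (ε/4) (by linarith)
  refine ⟨h, hh, ((key N (ε/4) (by linarith)).add h1).mono (fun x => ?_) (by linarith), ?_⟩
  · have := abs_add_le (F x - p N x) (p N x - h x)
    rw [abs_of_nonneg (sub_nonneg.2 (hpF N x))] at this
    rwa [sub_add_sub_cancel] at this
  · rw [abs_le] at h2 ⊢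
    constructor <;> linarith [hcC N]

lemma J_sup_of_dom {S : IntegralSystem X} {f : ℕ → X → ℝ} {g : X → ℝ} {c : ℕ → ℝ} {d : ℝ}
    (hf : ∀ n, J S (f n) (c n)) (hg : J S g d) (hdom : ∀ n x, |f n x| ≤ g x) :
    ∃ e, J S (fun x => ⨆ n, f n x) e := by
  have h1 : ∀ n, ∃ e, J S (partialSups f n) e := by
    intro n
    induction n with
    | zero => exact ⟨c 0, by simpa using hf 0⟩
    | succ n ih =>
      obtain ⟨e, he⟩ := ih
      rw [partialSups_add_one]
      exact he.sup (hf (n + 1))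
  choose e he using h1
  have hm : Monotone (fun n => partialSups f n) := partialSups_monotone f
  have hb : ∀ n x, partialSups f n x ≤ g x := fun n =>
    partialSups_le f n g (fun j _ x => (le_abs_self _).trans (hdom j x))
  have hem : Monotone e := fun m n hmn => (he m).mono (he n) (hm hmn)
  have heb : BddAbove (Set.range e) := ⟨d, by
    rintro _ ⟨n, rfl⟩; exact (he n).mono hg (hb n)⟩
  have hbf : ∀ x, BddAbove (Set.range (fun n => f n x)) := fun x => ⟨g x, by
    rintro _ ⟨n, rfl⟩; exact (le_abs_self _).trans (hdom n x)⟩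
  refine ⟨_, J.mct he hm (fun x => ?_) (tendsto_atTop_ciSup hem heb)⟩
  have hmx : Monotone (fun n => partialSups f n x) := fun _ _ h => hm h x
  have : (⨆ n, f n x) = ⨆ n, partialSups f n x := by
    apply le_antisymm
    · refine ciSup_mono ⟨g x, ?_⟩ (fun n => le_partialSups f n x)
      rintro _ ⟨n, rfl⟩; exact hb n x
    · refine ciSup_le (fun n => ?_)
      exact partialSups_le f n (fun x => ⨆ n, f n x) (fun j _ x => le_ciSup (hbf x) j) x
  rw [this]
  refine tendsto_atTop_ciSup hmx ⟨g x, ?_⟩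
  rintro _ ⟨n, rfl⟩; exact hb n x

lemma bdd_le {a : ℕ → ℝ} {b : ℝ} (h : ∀ n, |a n| ≤ b) :
    IsBoundedUnder (· ≤ ·) atTop a :=
  isBoundedUnder_of ⟨b, fun n => (le_abs_self _).trans (h n)⟩

lemma bdd_ge {a : ℕ → ℝ} {b : ℝ} (h : ∀ n, |a n| ≤ b) :
    IsBoundedUnder (· ≥ ·) atTop a :=
  isBoundedUnder_of ⟨-b, fun n => (abs_le.1 (h n)).1⟩

lemma limsup_neg_real {a : ℕ → ℝ} {b : ℝ} (h : ∀ n, |a n| ≤ b) :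
    limsup (fun n => - a n) atTop = - liminf a atTop := by
  have := Antitone.map_liminf_of_continuousAt (f := fun x : ℝ => -x) (F := (atTop : Filter ℕ))
    (fun _ _ h => neg_le_neg h) a
    continuous_neg.continuousAt (bdd_le h).isCoboundedUnder_ge (bdd_ge h)
  exact this.symm

lemma tendsto_sup_tail {a : ℕ → ℝ} {b : ℝ} (h : ∀ n, |a n| ≤ b) :
    Tendsto (fun k => ⨆ n, a (n + k)) atTop (𝓝 (limsup a atTop)) := by
  have hb : ∀ k, BddAbove (Set.range (fun n => a (n + k))) := fun k => ⟨b, by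
    rintro _ ⟨n, rfl⟩; exact (le_abs_self _).trans (h _)⟩
  rw [tendsto_order]
  constructor
  · intro r hr
    refine Eventually.of_forall fun k => hr.trans_le ?_
    refine limsup_le_of_le (bdd_ge h).isCoboundedUnder_le ?_
    filter_upwards [eventually_ge_atTop k] with n hn
    have := le_ciSup (hb k) (n - k)
    simpa [Nat.sub_add_cancel hn] using this
  · intro r hr
    obtain ⟨s, hs1, hs2⟩ := exists_between hr
    obtain ⟨N, hN⟩ := eventually_atTop.1 (eventually_lt_of_limsup_lt hs1 (bdd_le h))
    filter_upwards [eventually_ge_atTop N] with k hk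
    exact (ciSup_le fun n => (hN (n + k) (by omega)).le).trans_lt hs2

lemma J_limsup {S : IntegralSystem X} {f : ℕ → X → ℝ} {g : X → ℝ} {c : ℕ → ℝ} {d : ℝ}
    (hf : ∀ n, J S (f n) (c n)) (hg : J S g d) (hdom : ∀ n x, |f n x| ≤ g x) :
    ∃ e, J S (fun x => limsup (fun n => f n x) atTop) e ∧ limsup c atTop ≤ e := by
  have hc : ∀ n, |c n| ≤ d := fun n => abs_le.2
    ⟨hg.neg.mono (hf n) (fun x => (abs_le.1 (hdom n x)).1),
      (hf n).mono hg (fun x => (le_abs_self _).trans (hdom n x))⟩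
  have h1 : ∀ k, ∃ e, J S (fun x => ⨆ n, f (n + k) x) e := fun k =>
    J_sup_of_dom (f := fun n => f (n + k)) (fun n => hf (n + k)) hg (fun n x => hdom (n + k) x)
  choose e he using h1
  have hb : ∀ k x, BddAbove (Set.range (fun n => f (n + k) x)) := fun k x => ⟨g x, by
    rintro _ ⟨n, rfl⟩; exact (le_abs_self _).trans (hdom _ x)⟩
  have hanti : ∀ {k l : ℕ}, k ≤ l → ∀ x, (⨆ n, f (n + l) x) ≤ ⨆ n, f (n + k) x := by
    intro k l hkl x
    refine ciSup_le fun n => ?_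
    have := le_ciSup (hb k x) (n + (l - k))
    have h2 : n + (l - k) + k = n + l := by omega
    simpa only [h2] using this
  have hce : ∀ k, c k ≤ e k := fun k => (hf k).mono (he k) (fun x => by
    simpa using le_ciSup (hb k x) 0)
  have hea : Antitone e := fun k l hkl => (he l).mono (he k) (hanti hkl)
  have heb : BddBelow (Set.range e) := ⟨-d, by
    rintro _ ⟨n, rfl⟩; exact (abs_le.1 (hc n)).1.trans (hce n)⟩
  have het := tendsto_atTop_ciInf hea heb
  refine ⟨⨅ k, e k, ?_, ?_⟩
  · have := (J.mct (fun k => (he k).neg) (fun k l hkl x => neg_le_neg (hanti hkl x))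
      (fun x => (tendsto_sup_tail (fun n => hdom n x)).neg) het.neg).neg
    simpa only [neg_neg] using this
  · rw [← het.limsup_eq]
    exact limsup_le_limsup (Eventually.of_forall hce) (bdd_ge hc).isCoboundedUnder_le
      het.isBoundedUnder_le

end Daniell

/-- Dominated convergence theorem for the Daniell extension. -/
theorem daniell_dominated_convergence (S : IntegralSystem X) (f : ℕ → X → ℝ) (g : X → ℝ)
    (hf : ∀ n, Integrable1 S (f n)) (hg : Integrable1 S g)
    (hdom : ∀ n x, |f n x| ≤ g x) :
    Integrable1 S (fun x => ⨅ n, f n x) ∧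
    Integrable1 S (fun x => ⨆ n, f n x) ∧
    Integrable1 S (fun x => liminf (fun n => f n x) atTop) ∧
    Integrable1 S (fun x => limsup (fun n => f n x) atTop) ∧
    Int1 S (fun x => liminf (fun n => f n x) atTop) ≤ liminf (fun n => Int1 S (f n)) atTop ∧
    liminf (fun n => Int1 S (f n)) atTop ≤ limsup (fun n => Int1 S (f n)) atTop ∧
    limsup (fun n => Int1 S (f n)) atTop ≤ Int1 S (fun x => limsup (fun n => f n x) atTop) ∧
    (∀ F : X → ℝ, (∀ x, Tendsto (fun n => f n x) atTop (𝓝 (F x))) →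
      Integrable1 S F ∧ Tendsto (fun n => Int1 S (f n)) atTop (𝓝 (Int1 S F))) := by
  have hJ : ∀ n, Daniell.J S (f n) (Int1 S (f n)) := fun n => Daniell.J_of_integrable (hf n)
  have hJg := Daniell.J_of_integrable hg
  have hdom' : ∀ n x, |(-f n x)| ≤ g x := fun n x => by rw [abs_neg]; exact hdom n x
  have hc : ∀ n, |Int1 S (f n)| ≤ Int1 S g := fun n => abs_le.2
    ⟨hJg.neg.mono (hJ n) (fun x => (abs_le.1 (hdom n x)).1),
      (hJ n).mono hJg (fun x => (le_abs_self _).trans (hdom n x))⟩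
  obtain ⟨e1, he1⟩ := Daniell.J_sup_of_dom hJ hJg hdom
  obtain ⟨e2, he2⟩ := Daniell.J_sup_of_dom (fun n => (hJ n).neg) hJg hdom'
  obtain ⟨e3, he3, hle3⟩ := Daniell.J_limsup hJ hJg hdom
  obtain ⟨e4, he4, hle4⟩ := Daniell.J_limsup (fun n => (hJ n).neg) hJg hdom'
  have hinf : Daniell.J S (fun x => ⨅ n, f n x) (-e2) := by
    have h := he2.neg
    have h2 : (fun x => - ⨆ n, - f n x) = fun x => ⨅ n, f n x := by
      funext x
      rw [iInf, Real.sInf_def, iSup]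
      congr 2
      ext y
      simp [neg_eq_iff_eq_neg]
    rwa [h2] at h
  have hliminf : Daniell.J S (fun x => liminf (fun n => f n x) atTop) (-e4) := by
    have h := he4.neg
    have h2 : (fun x => - limsup (fun n => - f n x) atTop) =
        fun x => liminf (fun n => f n x) atTop := by
      funext x
      rw [Daniell.limsup_neg_real (fun n => hdom n x), neg_neg]
    rwa [h2] at h
  rw [Daniell.limsup_neg_real hc] at hle4
  have hA : Int1 S (fun x => liminf (fun n => f n x) atTop) ≤
      liminf (fun n => Int1 S (f n)) atTop := by rw [hliminf.int1]; linarith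
  have hB : limsup (fun n => Int1 S (f n)) atTop ≤
      Int1 S (fun x => limsup (fun n => f n x) atTop) := by rw [he3.int1]; exact hle3
  refine ⟨hinf.integrable, he1.integrable, hliminf.integrable, he3.integrable, hA,
    liminf_le_limsup (Daniell.bdd_le hc) (Daniell.bdd_ge hc), hB, fun F hF => ?_⟩
  have hF1 : (fun x => liminf (fun n => f n x) atTop) = F := funext fun x => (hF x).liminf_eq
  have hF2 : (fun x => limsup (fun n => f n x) atTop) = F := funext fun x => (hF x).limsup_eq
  rw [hF1] at hA hliminf
  rw [hF2] at hB
  exact ⟨hliminf.integrable, tendsto_of_le_liminf_of_limsup_le hA hB (Daniell.bdd_le hc)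
    (Daniell.bdd_ge hc)⟩
end
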